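/- Suppose the GI/G/1-type Markov chain is irreducible, aperiodic and positive recurrent with stationary distribution π, and the phase matrix A is stochastic. Then the chain is geometrically ergodic if and only if min(φ_{A+}, φ_{B+}) > 1, equivalently, if and only if both matrix sequences {A_k}_{k≥1} and {B_k}_{k≥1} are light-tailed. -/

import Mathlib

open Filter Topology
open scoped ENNReal NNReal BigOperators

namespace GIG1

/-- The state space of a `GI/G/1`-type Markov chain: level `i : ℕ`, phase `j : Fin m`. -/
abbrev S (m : ℕ) := ℕ × Fin m

/-- The transition kernel of the `GI/G/1`-type Markov chain with matrix blocks `A, B`. -/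
noncomputable def P {m : ℕ} (A B : ℤ → Matrix (Fin m) (Fin m) ℝ) : S m → S m → ℝ
  | (0, j), (k, s) => B (k : ℤ) j s
  | (i + 1, j), (0, s) => B (-(i + 1 : ℤ)) j s
  | (i + 1, j), (k + 1, s) => A ((k : ℤ) - (i : ℤ)) j s

/-- `n`-step transition probabilities. -/
noncomputable def Pn {m : ℕ} (P : S m → S m → ℝ) : ℕ → S m → S m → ℝ
  | 0, x, y => if x = y then 1 else 0
  | n + 1, x, y => ∑' z : S m, P x z * Pn P n z y

def Stochastic {m : ℕ} (P : S m → S m → ℝ) : Prop :=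
  (∀ x y, 0 ≤ P x y) ∧ ∀ x, HasSum (P x) 1

def ChainIrreducible {m : ℕ} (P : S m → S m → ℝ) : Prop :=
  ∀ x y, ∃ n, 1 ≤ n ∧ 0 < Pn P n x y

def ChainAperiodic {m : ℕ} (P : S m → S m → ℝ) : Prop :=
  ∀ x, ∃ N, ∀ n ≥ N, 0 < Pn P n x x

/-- `pd` is a stationary probability distribution of `P`; for an irreducible aperiodic chain
this is equivalent to positive recurrence. -/
def IsStationary {m : ℕ} (P : S m → S m → ℝ) (pd : S m → ℝ) : Prop :=
  (∀ x, 0 ≤ pd x) ∧ HasSum pd 1 ∧ ∀ y, HasSum (fun x => pd x * P x y) (pd y)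

/-- The phase matrix `A = ∑ₖ Aₖ`. -/
noncomputable def matA {m : ℕ} (A : ℤ → Matrix (Fin m) (Fin m) ℝ) : Matrix (Fin m) (Fin m) ℝ :=
  Matrix.of fun r s => ∑' k : ℤ, A k r s

/-- The phase matrix `A = ∑ₖ Aₖ` is stochastic. -/
def PhaseStochastic {m : ℕ} (A : ℤ → Matrix (Fin m) (Fin m) ℝ) : Prop :=
  ∀ r, HasSum (fun p : ℤ × Fin m => A p.1 r p.2) 1

/-- Irreducibility of a nonnegative matrix. -/
def MatIrreducible {m : ℕ} (M : Matrix (Fin m) (Fin m) ℝ) : Prop :=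
  ∀ r s, ∃ n, 1 ≤ n ∧ 0 < (M ^ n) r s

/-- Radius of convergence of a power series with nonnegative coefficients. -/
noncomputable def radius (c : ℕ → ℝ) : ℝ≥0∞ :=
  ⨆ (r : ℝ≥0) (_ : Summable fun k => c k * (r : ℝ) ^ k), (r : ℝ≥0∞)

/-- `φ_{A+}`: the minimum over entries of the radii of convergence of `∑_{k ≥ 1} A_k(r,s) z^k`. -/
noncomputable def phiA {m : ℕ} (A : ℤ → Matrix (Fin m) (Fin m) ℝ) : ℝ≥0∞ :=
  ⨅ (r : Fin m) (s : Fin m), radius fun k => A ((k : ℤ) + 1) r s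

/-- `φ_{B+}`. -/
noncomputable def phiB {m : ℕ} (B : ℤ → Matrix (Fin m) (Fin m) ℝ) : ℝ≥0∞ :=
  ⨅ (r : Fin m) (s : Fin m), radius fun k => B ((k : ℤ) + 1) r s

/-- The matrix sequence `{C_k}_{k ≥ 1}` is light-tailed. -/
def LightMat {m : ℕ} (C : ℤ → Matrix (Fin m) (Fin m) ℝ) : Prop :=
  ∀ r s, ∃ ε > (0 : ℝ),
    Summable fun k : ℕ => C ((k : ℤ) + 1) r s * Real.exp (ε * ((k : ℝ) + 1))

/-- `A^*(z) = ∑_{k ∈ ℤ} z^k A_k` for complex `z`. -/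
noncomputable def AstarC {m : ℕ} (A : ℤ → Matrix (Fin m) (Fin m) ℝ) (z : ℂ) :
    Matrix (Fin m) (Fin m) ℂ :=
  Matrix.of fun r s => ∑' k : ℤ, (A k r s : ℂ) * z ^ k

/-- `A^*(z) = ∑_{k ∈ ℤ} z^k A_k` for real `z`. -/
noncomputable def AstarR {m : ℕ} (A : ℤ → Matrix (Fin m) (Fin m) ℝ) (z : ℝ) :
    Matrix (Fin m) (Fin m) ℝ :=
  Matrix.of fun r s => ∑' k : ℤ, A k r s * z ^ k

/-- The set `Ω = {z ∈ ℂ : 1 < |z| < φ_{A+}, det(I - A^*(z)) = 0}`. -/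
def Omega {m : ℕ} (A : ℤ → Matrix (Fin m) (Fin m) ℝ) : Set ℂ :=
  {z | 1 < ‖z‖ ∧ ENNReal.ofReal ‖z‖ < phiA A ∧ (1 - AstarC A z).det = 0}

/-- `η`: the minimal modulus of an element of `Ω`, or `∞` when `Ω = ∅`. -/
noncomputable def eta {m : ℕ} (A : ℤ → Matrix (Fin m) (Fin m) ℝ) : ℝ≥0∞ :=
  sInf ((fun z : ℂ => ENNReal.ofReal ‖z‖) '' Omega A)

/-- The largest (Perron–Frobenius) eigenvalue of a nonnegative matrix. -/
noncomputable def chi {m : ℕ} (M : Matrix (Fin m) (Fin m) ℝ) : ℝ :=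
  sSup {r : ℝ | ∃ v : Fin m → ℝ, v ≠ 0 ∧ M.mulVec v = r • v}

/-!
Suppose the chain is geometrically ergodic. The convergence of the `n`-step probabilities to a
positive limit `π o` makes the tail of the return time to `o` geometric. The function
`exp (γ min(i, N))` of the level `i` shrinks in the mean at most by a factor `E` per step, because
the free walk jumps down by a random variable with a fixed law, and `E` is as close to `1` as we
like when `γ` is small. Stopping at `o` bounds the mean of this function after one step uniformly
in `N`, so the rows of the kernel have exponential moments.

Conversely, solve the Poisson equation of the phase process to correct the level by a function of
the phase so that its mean increment is a constant `σ`. If `σ` were nonnegative, the corrected level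
would be subharmonic up to reflection at zero, and positive recurrence would force it to be
harmonic, hence zero. So `σ < 0`, possibly after truncating the downward jumps, whose mean need not
be finite. Light tails then turn the exponential of the corrected level into a Lyapunov function
with geometric drift, and Harris' theorem gives geometric ergodicity.
-/

/-! ### Stochastic kernels -/

/-- A stochastic kernel from `α` to `β`, encoded as a matrix with nonnegative entries and rows of
sum `1`. The two types are allowed to differ so as to cover the law of the jumps of a chain. -/
structure IsStochasticKernel {α β : Type*} (Q : α → β → ℝ) : Prop where
  nonneg : ∀ x y, 0 ≤ Q x y
  hasSum_one : ∀ x, HasSum (Q x) 1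

/-- The function `f` is integrable against every row of `Q`. -/
def RowSummable {α β : Type*} (Q : α → β → ℝ) (f : β → ℝ) : Prop :=
  ∀ x, Summable fun y => Q x y * f y

/-- The transition operator `f ↦ Q f` of a kernel. It is meaningful when `RowSummable Q f`;
otherwise some of its values are `0`. -/
noncomputable def transOp {α β : Type*} (Q : α → β → ℝ) (f : β → ℝ) (x : α) : ℝ :=
  ∑' y, Q x y * f y

section Kernel

variable {α β : Type*} {Q : α → β → ℝ} {f g : β → ℝ} {c : ℝ}

lemma RowSummable.add (hf : RowSummable Q f) (hg : RowSummable Q g) :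
    RowSummable Q fun y => f y + g y :=
  fun x => ((hf x).add (hg x)).congr fun y => by ring

lemma RowSummable.sub (hf : RowSummable Q f) (hg : RowSummable Q g) :
    RowSummable Q fun y => f y - g y :=
  fun x => ((hf x).sub (hg x)).congr fun y => by ring

lemma RowSummable.const_mul (hf : RowSummable Q f) (c : ℝ) : RowSummable Q fun y => c * f y :=
  fun x => ((hf x).mul_left c).congr fun y => by ring

lemma transOp_add (hf : RowSummable Q f) (hg : RowSummable Q g) (x : α) :
    transOp Q (fun y => f y + g y) x = transOp Q f x + transOp Q g x := by
  simp only [transOp, mul_add, (hf x).tsum_add (hg x)]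

lemma transOp_sub (hf : RowSummable Q f) (hg : RowSummable Q g) (x : α) :
    transOp Q (fun y => f y - g y) x = transOp Q f x - transOp Q g x := by
  simp only [transOp, mul_sub, (hf x).tsum_sub (hg x)]

lemma transOp_const_mul (f : β → ℝ) (c : ℝ) (x : α) :
    transOp Q (fun y => c * f y) x = c * transOp Q f x := by
  simp only [transOp, mul_left_comm, tsum_mul_left]

lemma transOp_neg (Q : α → β → ℝ) (f : β → ℝ) (x : α) :
    transOp Q (fun y => -f y) x = -transOp Q f x := by
  simp only [transOp, mul_neg, tsum_neg]

lemma RowSummable.sum {ι : Type*} {F : ι → β → ℝ} (s : Finset ι)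
    (hF : ∀ i ∈ s, RowSummable Q (F i)) : RowSummable Q fun y => ∑ i ∈ s, F i y :=
  fun x => (summable_sum fun i hi => hF i hi x).congr fun _ => (Finset.mul_sum _ _ _).symm

lemma transOp_sum {ι : Type*} {F : ι → β → ℝ} (s : Finset ι)
    (hF : ∀ i ∈ s, RowSummable Q (F i)) (x : α) :
    transOp Q (fun y => ∑ i ∈ s, F i y) x = ∑ i ∈ s, transOp Q (F i) x := by
  simp only [transOp, Finset.mul_sum]
  exact Summable.tsum_finsetSum fun i hi => hF i hi x

lemma transOp_mono (hQ : ∀ x y, 0 ≤ Q x y) (hf : RowSummable Q f) (hg : RowSummable Q g)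
    (h : ∀ y, f y ≤ g y) (x : α) : transOp Q f x ≤ transOp Q g x :=
  (hf x).tsum_le_tsum (fun y => mul_le_mul_of_nonneg_left (h y) (hQ x y)) (hg x)

lemma transOp_nonneg (hQ : ∀ x y, 0 ≤ Q x y) (hf : ∀ y, 0 ≤ f y) (x : α) : 0 ≤ transOp Q f x :=
  tsum_nonneg fun y => mul_nonneg (hQ x y) (hf y)

namespace IsStochasticKernel

variable (hQ : IsStochasticKernel Q)
include hQ

lemma norm_mul_le_of_abs_le (h : ∀ y, |f y| ≤ g y) (x : α) (y : β) :
    ‖Q x y * f y‖ ≤ Q x y * g y := by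
  rw [Real.norm_eq_abs, abs_mul, abs_of_nonneg (hQ.nonneg x y)]
  exact mul_le_mul_of_nonneg_left (h y) (hQ.nonneg x y)

lemma rowSummable_of_abs_le (hg : RowSummable Q g) (h : ∀ y, |f y| ≤ g y) : RowSummable Q f :=
  fun x => (hg x).of_norm_bounded (hQ.norm_mul_le_of_abs_le h x)

lemma abs_transOp_le (hg : RowSummable Q g) (h : ∀ y, |f y| ≤ g y) (x : α) :
    |transOp Q f x| ≤ transOp Q g x :=
  tsum_of_norm_bounded (hg x).hasSum (hQ.norm_mul_le_of_abs_le h x)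

lemma rowSummable_const (c : ℝ) : RowSummable Q fun _ => c :=
  fun x => (hQ.hasSum_one x).summable.mul_right c

lemma rowSummable_of_bounded (h : ∀ y, |f y| ≤ c) : RowSummable Q f :=
  hQ.rowSummable_of_abs_le (hQ.rowSummable_const c) h

lemma transOp_const (c : ℝ) (x : α) : transOp Q (fun _ => c) x = c := by
  rw [transOp, tsum_mul_right, (hQ.hasSum_one x).tsum_eq, one_mul]

lemma transOp_sub_const {x : α} (hf : Summable fun y => Q x y * f y) (c : ℝ) :
    transOp Q (fun y => f y - c) x = transOp Q f x - c := by
  have h := hf.tsum_sub (hQ.rowSummable_const c x)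
  simp only [← mul_sub] at h
  rw [transOp, h, ← transOp, ← transOp, hQ.transOp_const]

lemma abs_transOp_le_const (h : ∀ y, |f y| ≤ c) (x : α) : |transOp Q f x| ≤ c :=
  (hQ.abs_transOp_le (hQ.rowSummable_const c) h x).trans_eq (hQ.transOp_const c x)

end IsStochasticKernel

lemma hasSum_tsum_mul_of_nonneg {μ : α → ℝ} (hμ : ∀ x, 0 ≤ μ x) (hQ : ∀ x y, 0 ≤ Q x y)
    (hf : ∀ y, 0 ≤ f y) (hrow : RowSummable Q f) (hs : Summable fun x => μ x * transOp Q f x) :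
    HasSum (fun y => (∑' x, μ x * Q x y) * f y) (∑' x, μ x * transOp Q f x) := by
  have hnn : 0 ≤ fun p : α × β => μ p.1 * (Q p.1 p.2 * f p.2) :=
    fun p => mul_nonneg (hμ _) (mul_nonneg (hQ _ _) (hf _))
  have hpair : Summable fun p : α × β => μ p.1 * (Q p.1 p.2 * f p.2) := by
    refine (summable_prod_of_nonneg hnn).2 ⟨fun x => (hrow x).mul_left (μ x), ?_⟩
    simpa only [transOp, tsum_mul_left] using hs
  have hswap : Summable fun y => ∑' x, μ x * (Q x y * f y) := hpair.prod_symm.prod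
  have hcomm : ∑' y, ∑' x, μ x * (Q x y * f y) = ∑' x, μ x * transOp Q f x := by
    simpa only [transOp, tsum_mul_left] using
      Summable.tsum_comm (f := fun x y => μ x * (Q x y * f y)) hpair
  rw [← hcomm]
  simpa only [← mul_assoc, tsum_mul_right] using hswap.hasSum

end Kernel

/-! ### Iterated kernels and invariant laws -/

/-- The `n`-step transition probabilities of a kernel, obtained by iterating its transition
operator on the indicator of the target state. -/
noncomputable def nStep {α : Type*} [DecidableEq α] (Q : α → α → ℝ) (n : ℕ) (x y : α) : ℝ :=
  (transOp Q)^[n] (Pi.single y 1) x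

/-- `π` is an invariant probability distribution of the kernel `Q`. -/
structure IsInvariantLaw {α : Type*} (Q : α → α → ℝ) (π : α → ℝ) : Prop where
  nonneg : ∀ x, 0 ≤ π x
  hasSum_one : HasSum π 1
  hasSum_mul : ∀ y, HasSum (fun x => π x * Q x y) (π y)

/-- Geometric ergodicity of the kernel `Q` with limit law `π`. The constant may depend on both
states. -/
def IsGeometricallyErgodic {α : Type*} [DecidableEq α] (Q : α → α → ℝ) (π : α → ℝ) : Prop :=
  ∃ ρ : ℝ, 0 ≤ ρ ∧ ρ < 1 ∧ ∃ M : α → α → ℝ, ∀ x y n, |nStep Q n x y - π y| ≤ M x y * ρ ^ n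

section InvariantLaw

variable {α : Type*} {Q : α → α → ℝ} {f : α → ℝ}

namespace IsInvariantLaw

variable {π : α → ℝ} (hπ : IsInvariantLaw Q π)
include hπ

lemma summable_mul_of_bounded {c : ℝ} (hf : ∀ x, |f x| ≤ c) : Summable fun x => π x * f x := by
  refine (hπ.hasSum_one.summable.mul_right c).of_norm_bounded fun x => ?_
  rw [Real.norm_eq_abs, abs_mul, abs_of_nonneg (hπ.nonneg x)]
  exact mul_le_mul_of_nonneg_left (hf x) (hπ.nonneg x)

lemma hasSum_mul_transOp (hQ : IsStochasticKernel Q) {c : ℝ} (h0 : ∀ x, 0 ≤ f x)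
    (hf : ∀ x, f x ≤ c) : HasSum (fun x => π x * transOp Q f x) (∑' x, π x * f x) := by
  have habs : ∀ x, |f x| ≤ c := fun x => (abs_of_nonneg (h0 x)).trans_le (hf x)
  have hs := hπ.summable_mul_of_bounded (hQ.abs_transOp_le_const habs)
  have h := hasSum_tsum_mul_of_nonneg hπ.nonneg hQ.nonneg h0 (hQ.rowSummable_of_bounded habs) hs
  simp only [(hπ.hasSum_mul _).tsum_eq] at h
  exact h.tsum_eq ▸ hs.hasSum

end IsInvariantLaw

end InvariantLaw

section NStep

variable {α : Type*} [DecidableEq α] {Q : α → α → ℝ} {f : α → ℝ}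

@[simp]
lemma nStep_zero (x y : α) : nStep Q 0 x y = if x = y then 1 else 0 := Pi.single_apply y 1 x

lemma nStep_succ (n : ℕ) (x y : α) :
    nStep Q (n + 1) x y = transOp Q (fun z => nStep Q n z y) x := by
  rw [nStep, Function.iterate_succ_apply']
  rfl

lemma nStep_one (x y : α) : nStep Q 1 x y = Q x y := by
  rw [nStep_succ, transOp, tsum_eq_single y fun z hz => by simp [hz]]
  simp

lemma transOp_nStep_zero (f : α → ℝ) : transOp (nStep Q 0) f = f := by
  funext x
  rw [transOp, tsum_eq_single x fun z hz => by simp [hz.symm]]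
  simp

namespace IsStochasticKernel

variable (hQ : IsStochasticKernel Q)
include hQ

lemma nStep_nonneg (n : ℕ) : ∀ x y, 0 ≤ nStep Q n x y := by
  induction n with
  | zero => exact fun x y => by rw [nStep_zero]; positivity
  | succ n ih =>
    intro x y
    rw [nStep_succ]
    exact transOp_nonneg hQ.nonneg (fun z => ih z y) x

lemma hasSum_nStep_succ_mul {n : ℕ} (hf : ∀ y, 0 ≤ f y) (hn : RowSummable (nStep Q n) f)
    (hT : RowSummable Q (transOp (nStep Q n) f)) (x : α) :
    HasSum (fun y => nStep Q (n + 1) x y * f y) (transOp Q (transOp (nStep Q n) f) x) := by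
  simp only [nStep_succ]
  exact hasSum_tsum_mul_of_nonneg (hQ.nonneg x) (hQ.nStep_nonneg n) hf hn (hT x)

lemma stochastic_nStep (n : ℕ) : IsStochasticKernel (nStep Q n) := by
  refine ⟨hQ.nStep_nonneg n, fun x => ?_⟩
  induction n generalizing x with
  | zero =>
    exact (hasSum_ite_eq x (1 : ℝ)).congr_fun fun y => by simp [eq_comm]
  | succ n ih =>
    have hn : IsStochasticKernel (nStep Q n) := ⟨hQ.nStep_nonneg n, ih⟩
    have hone : transOp (nStep Q n) (fun _ => 1) = fun _ => 1 := funext (hn.transOp_const 1)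
    have h := hQ.hasSum_nStep_succ_mul (fun _ => zero_le_one) (hn.rowSummable_const 1)
      (by rw [hone]; exact hQ.rowSummable_const 1) x
    simpa only [hone, hQ.transOp_const, mul_one] using h

lemma nStep_le_one (n : ℕ) (x y : α) : nStep Q n x y ≤ 1 :=
  le_hasSum ((hQ.stochastic_nStep n).hasSum_one x) y fun z _ => hQ.nStep_nonneg n x z

lemma abs_nStep_le_one (n : ℕ) (x y : α) : |nStep Q n x y| ≤ 1 :=
  (abs_of_nonneg (hQ.nStep_nonneg n x y)).trans_le (hQ.nStep_le_one n x y)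

lemma rowSummable_nStep (n : ℕ) (y : α) : RowSummable Q fun x => nStep Q n x y :=
  hQ.rowSummable_of_bounded fun x => hQ.abs_nStep_le_one n x y

lemma nStep_add (k n : ℕ) (y : α) :
    (fun x => nStep Q (k + n) x y) =
      transOp (nStep Q k) fun z => nStep Q n z y := by
  induction k with
  | zero => rw [zero_add, transOp_nStep_zero]
  | succ k ih =>
    funext x
    have h := hQ.hasSum_nStep_succ_mul (fun z => hQ.nStep_nonneg n z y)
      ((hQ.stochastic_nStep k).rowSummable_of_bounded fun z => hQ.abs_nStep_le_one n z y)
      (ih ▸ hQ.rowSummable_nStep (k + n) y) x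
    rw [Nat.add_right_comm, nStep_succ, ih]
    exact h.tsum_eq.symm

lemma nStep_mul_nStep_le (k n : ℕ) (x y z : α) :
    nStep Q k x z * nStep Q n z y ≤ nStep Q (k + n) x y := by
  rw [congrFun (hQ.nStep_add k n y) x]
  have hrow := (hQ.stochastic_nStep k).rowSummable_of_bounded fun w => hQ.abs_nStep_le_one n w y
  exact (hrow x).le_tsum z
    fun w _ => mul_nonneg (hQ.nStep_nonneg k x w) (hQ.nStep_nonneg n w y)

lemma mul_nStep_le_of_transOp_le (hf : RowSummable Q f) (h0 : ∀ x, 0 ≤ f x)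
    (hT : ∀ x, transOp Q f x ≤ f x) (y : α) (n : ℕ) (x : α) :
    f y * nStep Q n x y ≤ f x := by
  induction n generalizing x with
  | zero =>
    rcases eq_or_ne x y with rfl | hxy
    · simp
    · simpa [hxy] using h0 x
  | succ n ih =>
    rw [nStep_succ, ← transOp_const_mul]
    exact (transOp_mono hQ.nonneg ((hQ.rowSummable_nStep n y).const_mul _) hf ih x).trans (hT x)

end IsStochasticKernel

namespace IsInvariantLaw

variable {π : α → ℝ} (hπ : IsInvariantLaw Q π)
include hπ

lemma hasSum_mul_nStep (hQ : IsStochasticKernel Q) (n : ℕ) (y : α) :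
    HasSum (fun x => π x * nStep Q n x y) (π y) := by
  induction n with
  | zero =>
    refine (hasSum_ite_eq y (π y)).congr_fun fun x => ?_
    by_cases h : x = y <;> simp [h]
  | succ n ih =>
    simp only [nStep_succ]
    exact ih.tsum_eq ▸ hπ.hasSum_mul_transOp hQ (fun x => hQ.nStep_nonneg n x y)
      (fun x => hQ.nStep_le_one n x y)

lemma pos_of_exists_nStep_pos (hQ : IsStochasticKernel Q) {y : α}
    (h : ∀ x, ∃ n, 0 < nStep Q n x y) : 0 < π y := by
  obtain ⟨x, hx⟩ : ∃ x, π x ≠ 0 := by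
    by_contra! hzero
    exact one_ne_zero (hπ.hasSum_one.unique ((funext hzero : π = 0) ▸ hasSum_zero))
  obtain ⟨n, hn⟩ := h x
  exact (mul_pos ((hπ.nonneg x).lt_of_ne' hx) hn).trans_le <|
    le_hasSum (hπ.hasSum_mul_nStep hQ n y) x fun z _ =>
      mul_nonneg (hπ.nonneg z) (hQ.nStep_nonneg n z y)

end IsInvariantLaw

end NStep

/-! ### Harris' theorem after Hairer and Mattingly -/

lemma exists_abs_sub_le_of_abs_sub_le_add {α : Type*} [Nonempty α] {φ w : α → ℝ}
    (h : ∀ x y, |φ x - φ y| ≤ w x + w y) : ∃ c, ∀ x, |φ x - c| ≤ w x := by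
  have hle : ∀ x y, φ x - w x ≤ φ y + w y := fun x y => by linarith [le_of_abs_le (h x y)]
  have hbdd : BddBelow (Set.range fun y => φ y + w y) :=
    ⟨φ (Classical.arbitrary α) - w (Classical.arbitrary α), Set.forall_mem_range.2 (hle _)⟩
  refine ⟨⨅ y, (φ y + w y), fun x => abs_sub_le_iff.2 ⟨?_, ?_⟩⟩
  · linarith [le_ciInf (hle x)]
  · linarith [ciInf_le hbdd x]

/-- The weighted oscillation contracts as soon as the drift of `V` (large levels) or a common atom
of the two rows (small levels) gains a factor; here `s` and `t` stand for the sums of `V` and of its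
image at two states, and `q` for the mass of the common atom. -/
lemma exists_contraction_factor {l K R a : ℝ} (hl0 : 0 ≤ l) (hl : l < 1) (hK : 0 < K)
    (hR : 2 * K < (1 - l) * R) (ha : 0 < a) :
    ∃ β κ : ℝ, 0 < β ∧ 0 < κ ∧ κ < 1 ∧ ∀ s t q : ℝ, 0 ≤ s → t ≤ l * s + 2 * K → 0 ≤ q →
      (s < R → a ≤ q) → 2 + β * t - 2 * q ≤ κ * (2 + β * s) := by
  have hR0 : 0 < R := pos_of_mul_pos_right (by linarith) (sub_nonneg.2 hl.le)
  obtain ⟨β, hβ, hβK⟩ : ∃ β : ℝ, 0 < β ∧ β * (2 * K) = a :=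
    ⟨a / (2 * K), by positivity, by field_simp⟩
  have hden : 0 < 2 + β * R := by positivity
  set κ₁ := (2 + β * (2 * K + l * R)) / (2 + β * R)
  have hκ₁R : κ₁ * (2 + β * R) = 2 + β * (2 * K + l * R) := div_mul_cancel₀ _ hden.ne'
  have hκ₁lt : κ₁ < 1 := (div_lt_one hden).2 (by nlinarith)
  have hlκ₁ : l ≤ κ₁ := (le_div_iff₀ hden).2 (by nlinarith)
  have hκ₁κ : κ₁ ≤ max κ₁ (1 - a / 2) := le_max_left _ _
  have haκ : 1 - a / 2 ≤ max κ₁ (1 - a / 2) := le_max_right _ _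
  have hκ₁0 : 0 < κ₁ := by positivity
  refine ⟨β, max κ₁ (1 - a / 2), hβ, hκ₁0.trans_le hκ₁κ, max_lt hκ₁lt (by linarith), ?_⟩
  intro s t q hs ht hq hsq
  have hβs : 0 ≤ β * s := by positivity
  have hβt : β * t ≤ l * (β * s) + a := by nlinarith
  rcases lt_or_ge s R with hsR | hRs
  · nlinarith [hsq hsR, mul_le_mul_of_nonneg_right (hlκ₁.trans hκ₁κ) hβs]
  · have hexcess : 0 ≤ (κ₁ - l) * (β * (s - R)) :=
      mul_nonneg (by linarith) (mul_nonneg hβ.le (by linarith))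
    have hfactor : 2 + l * (β * s) + a ≤ κ₁ * (2 + β * s) := by linarith
    linarith [hfactor, mul_le_mul_of_nonneg_right hκ₁κ (by positivity : 0 ≤ 2 + β * s)]

lemma exists_uniform_nStep_lower_bound {α : Type*} [DecidableEq α] {Q : α → α → ℝ} {o : α}
    {s : Set α} (hs : s.Finite) (ho : ∀ x, ∀ᶠ n in atTop, 0 < nStep Q n x o) :
    ∃ N, 1 ≤ N ∧ ∃ a : ℝ, 0 < a ∧ ∀ x ∈ s, a ≤ nStep Q N x o := by
  obtain ⟨N, hN1, hN⟩ :=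
    ((eventually_ge_atTop 1).and ((eventually_all_finite hs).2 fun x _ => ho x)).exists
  have hlow : ∀ᶠ a in 𝓝[>] (0 : ℝ), ∀ x ∈ s, a ≤ nStep Q N x o :=
    (eventually_all_finite hs).2 fun x hx =>
      eventually_of_mem (Ioc_mem_nhdsGT (hN x hx)) fun _ ha => ha.2
  obtain ⟨a, ha, ha0⟩ := (hlow.and self_mem_nhdsWithin).exists
  exact ⟨N, hN1, a, ha0, ha⟩

namespace IsStochasticKernel

section Coupling

variable {α β : Type*} {Q : α → β → ℝ} (hQ : IsStochasticKernel Q)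
include hQ

lemma mul_le_transOp {f : β → ℝ} (hf : RowSummable Q f) (h0 : ∀ y, 0 ≤ f y) (x : α) (y : β) :
    Q x y * f y ≤ transOp Q f x :=
  (hf x).le_tsum y fun z _ => mul_nonneg (hQ.nonneg x z) (h0 z)

lemma transOp_sub_le_of_abs_sub_le_add {φ w : β → ℝ} (hφ : RowSummable Q φ) (hw : RowSummable Q w)
    (h : ∀ y z, |φ y - φ z| ≤ w y + w z) (o : β) (x x' : α) :
    transOp Q φ x - transOp Q φ x' ≤
      transOp Q w x + transOp Q w x' - 2 * w o * min (Q x o) (Q x' o) := by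
  have : Nonempty β := ⟨o⟩
  obtain ⟨c, hc⟩ := exists_abs_sub_le_of_abs_sub_le_add h
  have hψ := hφ.sub (hQ.rowSummable_const c)
  have hTψ : ∀ x, transOp Q (fun y => φ y - c) x = transOp Q φ x - c := fun x => by
    rw [transOp_sub hφ (hQ.rowSummable_const c), hQ.transOp_const]
  have hup := hQ.mul_le_transOp (hw.sub hψ) (fun y => by linarith [le_of_abs_le (hc y)]) x o
  have hdown := hQ.mul_le_transOp (hw.add hψ) (fun y => by linarith [neg_le_of_abs_le (hc y)]) x' o
  rw [transOp_sub hw hψ, hTψ] at hup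
  rw [transOp_add hw hψ, hTψ] at hdown
  have hx := mul_le_mul_of_nonneg_right (min_le_left (Q x o) (Q x' o))
    (by linarith [le_of_abs_le (hc o)] : 0 ≤ w o - (φ o - c))
  have hx' := mul_le_mul_of_nonneg_right (min_le_right (Q x o) (Q x' o))
    (by linarith [neg_le_of_abs_le (hc o)] : 0 ≤ w o + (φ o - c))
  linarith

lemma abs_transOp_sub_le_of_abs_sub_le_add {φ w : β → ℝ} (hφ : RowSummable Q φ)
    (hw : RowSummable Q w) (h : ∀ y z, |φ y - φ z| ≤ w y + w z) (o : β) (x x' : α) :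
    |transOp Q φ x - transOp Q φ x'| ≤
      transOp Q w x + transOp Q w x' - 2 * w o * min (Q x o) (Q x' o) := by
  refine abs_sub_le_iff.2 ⟨hQ.transOp_sub_le_of_abs_sub_le_add hφ hw h o x x', ?_⟩
  rw [min_comm, add_comm (transOp Q w x)]
  exact hQ.transOp_sub_le_of_abs_sub_le_add hφ hw h o x' x

end Coupling

variable {α : Type*} {Q : α → α → ℝ} (hQ : IsStochasticKernel Q)
include hQ

lemma exists_oscillation_contraction {V : α → ℝ} (hV0 : ∀ x, 0 ≤ V x) (hV : RowSummable Q V)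
    {l K R a : ℝ} (hl0 : 0 ≤ l) (hl : l < 1) (hK : 0 < K) (hR : 2 * K < (1 - l) * R) (ha : 0 < a)
    (hdrift : ∀ x, transOp Q V x ≤ l * V x + K) {o : α} (hatom : ∀ x, V x ≤ R → a ≤ Q x o) :
    ∃ β κ : ℝ, 0 < β ∧ 0 < κ ∧ κ < 1 ∧ ∀ (φ : α → ℝ) (D : ℝ), RowSummable Q φ → 0 ≤ D →
      (∀ x y, |φ x - φ y| ≤ D * ((1 + β * V x) + (1 + β * V y))) →
      ∀ x y, |transOp Q φ x - transOp Q φ y| ≤ κ * D * ((1 + β * V x) + (1 + β * V y)) := by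
  obtain ⟨β, κ, hβ, hκ0, hκ1, hfactor⟩ := exists_contraction_factor hl0 hl hK hR ha
  refine ⟨β, κ, hβ, hκ0, hκ1, fun φ D hφ hD hosc x y => ?_⟩
  have hw : RowSummable Q fun z => D + D * β * V z :=
    (hQ.rowSummable_const D).add (hV.const_mul (D * β))
  have hTw : ∀ x, transOp Q (fun z => D + D * β * V z) x = D + D * β * transOp Q V x := fun x => by
    rw [transOp_add (hQ.rowSummable_const D) (hV.const_mul (D * β)), hQ.transOp_const,
      transOp_const_mul]
  have hcouple := hQ.abs_transOp_sub_le_of_abs_sub_le_add hφ hw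
    (fun x y => (hosc x y).trans_eq (by ring)) o x y
  rw [hTw, hTw] at hcouple
  have hmin0 : 0 ≤ min (Q x o) (Q y o) := le_min (hQ.nonneg x o) (hQ.nonneg y o)
  have hmin : D * min (Q x o) (Q y o) ≤ (D + D * β * V o) * min (Q x o) (Q y o) :=
    mul_le_mul_of_nonneg_right (le_add_of_nonneg_right (by have := hV0 o; positivity)) hmin0
  have hgain := mul_le_mul_of_nonneg_left (hfactor (V x + V y) (transOp Q V x + transOp Q V y) _
    (add_nonneg (hV0 x) (hV0 y)) (by linarith [hdrift x, hdrift y]) hmin0 fun hs =>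
      le_min (hatom x (by linarith [hV0 y])) (hatom y (by linarith [hV0 x]))) hD
  linarith

variable [DecidableEq α]

lemma drift_nStep {V : α → ℝ} (hV0 : ∀ x, 0 ≤ V x) (hV : RowSummable Q V) {l c : ℝ}
    (hl0 : 0 ≤ l) (hdrift : ∀ x, transOp Q V x ≤ l * V x + (1 - l) * c) (n : ℕ) :
    RowSummable (nStep Q n) V ∧
      ∀ x, transOp (nStep Q n) V x ≤ l ^ n * V x + (1 - l ^ n) * c := by
  induction n with
  | zero =>
    refine ⟨fun x => ?_, fun x => by simp [transOp_nStep_zero]⟩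
    refine summable_of_ne_finset_zero (s := {x}) fun y hy => ?_
    simp [Ne.symm (Finset.notMem_singleton.1 hy)]
  | succ n ih =>
    have hbound := (hV.const_mul (l ^ n)).add (hQ.rowSummable_const ((1 - l ^ n) * c))
    have hT0 := transOp_nonneg (hQ.nStep_nonneg n) hV0
    have hT : RowSummable Q (transOp (nStep Q n) V) :=
      hQ.rowSummable_of_abs_le hbound fun x => (abs_of_nonneg (hT0 x)).trans_le (ih.2 x)
    refine ⟨fun x => (hQ.hasSum_nStep_succ_mul hV0 ih.1 hT x).summable, fun x => ?_⟩
    calc transOp (nStep Q (n + 1)) V x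
        = transOp Q (transOp (nStep Q n) V) x := (hQ.hasSum_nStep_succ_mul hV0 ih.1 hT x).tsum_eq
      _ ≤ transOp Q (fun y => l ^ n * V y + (1 - l ^ n) * c) x :=
        transOp_mono hQ.nonneg hT hbound ih.2 x
      _ = l ^ n * transOp Q V x + (1 - l ^ n) * c := by
        rw [transOp_add (hV.const_mul _) (hQ.rowSummable_const _), transOp_const_mul,
          hQ.transOp_const]
      _ ≤ l ^ n * (l * V x + (1 - l) * c) + (1 - l ^ n) * c := by gcongr; exact hdrift x
      _ = l ^ (n + 1) * V x + (1 - l ^ (n + 1)) * c := by ring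

lemma abs_nStep_sub_le_one (n : ℕ) (x x' y : α) : |nStep Q n x y - nStep Q n x' y| ≤ 1 := by
  refine abs_sub_le_iff.2 ⟨?_, ?_⟩ <;>
    linarith [hQ.nStep_nonneg n x y, hQ.nStep_le_one n x y, hQ.nStep_nonneg n x' y,
      hQ.nStep_le_one n x' y]

lemma exists_oscillation_nStep_le_pow {w : α → ℝ} (hw : ∀ x, 1 ≤ w x) {N : ℕ} (hN : 1 ≤ N)
    {κ : ℝ} (hκ0 : 0 < κ) (hκ1 : κ < 1)
    (hcontr : ∀ (n : ℕ) (y : α) (D : ℝ), 0 ≤ D →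
      (∀ x x', |nStep Q n x y - nStep Q n x' y| ≤ D * (w x + w x')) →
      ∀ x x', |nStep Q (N + n) x y - nStep Q (N + n) x' y| ≤ κ * D * (w x + w x')) :
    ∃ ρ : ℝ, 0 ≤ ρ ∧ ρ < 1 ∧
      ∀ n x x' y, |nStep Q n x y - nStep Q n x' y| ≤ κ⁻¹ * ρ ^ n * (w x + w x') := by
  have hN0 : N ≠ 0 := Nat.one_le_iff_ne_zero.1 hN
  set ρ := κ ^ (N : ℝ)⁻¹
  have hρN : ρ ^ N = κ := Real.rpow_inv_natCast_pow hκ0.le hN0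
  have hρ0 : 0 < ρ := Real.rpow_pos_of_pos hκ0 _
  have hρ1 : ρ < 1 := Real.rpow_lt_one hκ0.le hκ1 (by positivity)
  refine ⟨ρ, hρ0.le, hρ1, fun n x x' y => ?_⟩
  induction n using Nat.strong_induction_on generalizing x x' with
  | _ n ih =>
    rcases lt_or_ge n N with hn | hn
    · have hκρ : 1 ≤ κ⁻¹ * ρ ^ n := by
        rw [inv_mul_eq_div, one_le_div hκ0, ← hρN]
        exact pow_le_pow_of_le_one hρ0.le hρ1.le hn.le
      nlinarith [hQ.abs_nStep_sub_le_one n x x' y, hw x, hw x']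
    · obtain ⟨k, rfl⟩ := Nat.exists_eq_add_of_le hn
      have hstep := hcontr k y (κ⁻¹ * ρ ^ k) (by positivity) (fun x x' => ih k (by omega) x x') x x'
      rwa [show κ * (κ⁻¹ * ρ ^ k) = κ⁻¹ * ρ ^ (N + k) by rw [pow_add, hρN]; ring] at hstep

lemma tendsto_nStep_of_oscillation {π : α → ℝ} (hπ : IsInvariantLaw Q π) {y : α}
    (hosc : ∀ x x', Tendsto (fun n => nStep Q n x' y - nStep Q n x y) atTop (𝓝 0)) (x : α) :
    Tendsto (fun n => nStep Q n x y) atTop (𝓝 (π y)) := by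
  have hmean : ∀ n, ∑' x', π x' * (nStep Q n x' y - nStep Q n x y) = π y - nStep Q n x y := by
    intro n
    have h := (hπ.hasSum_mul_nStep hQ n y).sub (hπ.hasSum_one.mul_right (nStep Q n x y))
    rw [one_mul] at h
    simpa only [mul_sub] using h.tsum_eq
  have hlim : Tendsto (fun n => ∑' x', π x' * (nStep Q n x' y - nStep Q n x y)) atTop
      (𝓝 (∑' x', π x' * 0)) := by
    refine tendsto_tsum_of_dominated_convergence hπ.hasSum_one.summable
      (fun x' => (hosc x x').const_mul (π x')) (Eventually.of_forall fun n x' => ?_)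
    rw [Real.norm_eq_abs, abs_mul, abs_of_nonneg (hπ.nonneg x')]
    exact mul_le_of_le_one_right (hπ.nonneg x') (hQ.abs_nStep_sub_le_one n x' x y)
  simp only [hmean, mul_zero, tsum_zero] at hlim
  simpa using hlim.const_sub (π y)

lemma isGeometricallyErgodic_of_oscillation {π : α → ℝ} (hπ : IsInvariantLaw Q π) {w : α → ℝ}
    (hw : RowSummable Q w) {C ρ : ℝ} (hρ0 : 0 ≤ ρ) (hρ1 : ρ < 1)
    (hosc : ∀ n x x' y, |nStep Q n x y - nStep Q n x' y| ≤ C * ρ ^ n * (w x + w x')) :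
    IsGeometricallyErgodic Q π := by
  have hlim : ∀ x y, Tendsto (fun n => nStep Q n x y) atTop (𝓝 (π y)) := by
    refine fun x y => hQ.tendsto_nStep_of_oscillation hπ (fun x x' => ?_) x
    refine squeeze_zero_norm (fun n => hosc n x' x y) ?_
    simpa using
      ((tendsto_pow_atTop_nhds_zero_of_lt_one hρ0 hρ1).const_mul C).mul_const (w x' + w x)
  have hstep : ∀ x y n,
      dist (nStep Q n x y) (nStep Q (n + 1) x y) ≤ C * (w x + transOp Q w x) * ρ ^ n := by
    intro x y n
    have hwx : RowSummable Q fun z => w z + w x := hw.add (hQ.rowSummable_const _)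
    calc dist (nStep Q n x y) (nStep Q (n + 1) x y)
        = |transOp Q (fun z => nStep Q n z y - nStep Q n x y) x| := by
          rw [transOp_sub (hQ.rowSummable_nStep n y) (hQ.rowSummable_const _), hQ.transOp_const,
            ← nStep_succ, dist_comm, Real.dist_eq]
      _ ≤ transOp Q (fun z => C * ρ ^ n * (w z + w x)) x :=
          hQ.abs_transOp_le (hwx.const_mul _) (fun z => hosc n z x y) x
      _ = C * (w x + transOp Q w x) * ρ ^ n := by
          rw [transOp_const_mul, transOp_add hw (hQ.rowSummable_const _), hQ.transOp_const]
          ring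
  refine ⟨ρ, hρ0, hρ1, fun x _ => C * (w x + transOp Q w x) / (1 - ρ), fun x y n => ?_⟩
  have h := dist_le_of_le_geometric_of_tendsto ρ _ hρ1 (hstep x y) (hlim x y) n
  rwa [Real.dist_eq, mul_div_right_comm] at h

theorem isGeometricallyErgodic_of_drift {π : α → ℝ} (hπ : IsInvariantLaw Q π) {o : α}
    (ho : ∀ x, ∀ᶠ n in atTop, 0 < nStep Q n x o) {V : α → ℝ} (hV0 : ∀ x, 0 ≤ V x)
    (hV : RowSummable Q V) (hfin : ∀ R, {x | V x ≤ R}.Finite) {l b : ℝ} (hl0 : 0 ≤ l) (hl : l < 1)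
    (hb : 0 ≤ b) (hdrift : ∀ x, transOp Q V x ≤ l * V x + b) : IsGeometricallyErgodic Q π := by
  have hl' : 0 < 1 - l := sub_pos.2 hl
  set K := b / (1 - l) + 1
  have hK : 0 < K := by positivity
  obtain ⟨R, hR⟩ : ∃ R, 2 * K < (1 - l) * R :=
    (exists_gt (2 * K / (1 - l))).imp fun R h => (div_lt_iff₀' hl').1 h
  obtain ⟨N, hN, a, ha, hatom⟩ := exists_uniform_nStep_lower_bound (hfin R) ho
  obtain ⟨hVN, hdriftN⟩ := hQ.drift_nStep hV0 hV (c := b / (1 - l)) hl0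
    (fun x => by rw [mul_div_cancel₀ _ hl'.ne']; exact hdrift x) N
  have hlN : l ^ N ≤ l := pow_le_of_le_one hl0 hl.le (Nat.one_le_iff_ne_zero.1 hN)
  have hdriftK : ∀ x, transOp (nStep Q N) V x ≤ l * V x + K := by
    intro x
    have hVx := mul_le_mul_of_nonneg_right hlN (hV0 x)
    have hc : (1 - l ^ N) * (b / (1 - l)) ≤ b / (1 - l) :=
      mul_le_of_le_one_left (by positivity) (by linarith [pow_nonneg hl0 N])
    linarith [hdriftN x]
  obtain ⟨β, κ, hβ, hκ0, hκ1, hcontr⟩ := (hQ.stochastic_nStep N).exists_oscillation_contraction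
    hV0 hVN hl0 hl hK hR ha hdriftK hatom
  obtain ⟨ρ, hρ0, hρ1, hosc⟩ := hQ.exists_oscillation_nStep_le_pow (w := fun x => 1 + β * V x)
    (fun x => le_add_of_nonneg_right (mul_nonneg hβ.le (hV0 x))) hN hκ0 hκ1
    fun n y D hD h x x' => by
      rw [congrFun (hQ.nStep_add N n y) x, congrFun (hQ.nStep_add N n y) x']
      exact hcontr _ D ((hQ.stochastic_nStep N).rowSummable_of_bounded
        fun z => hQ.abs_nStep_le_one n z y) hD h x x'
  exact hQ.isGeometricallyErgodic_of_oscillation hπ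
    ((hQ.rowSummable_const 1).add (hV.const_mul β)) hρ0 hρ1 hosc

end IsStochasticKernel

/-! ### Exponential moments of return times -/

/-- The restriction of the kernel `Q` to the moves that do not enter the state `o`. -/
def tabooKernel {α β : Type*} [DecidableEq β] (Q : α → β → ℝ) (o : β) (x : α) (y : β) : ℝ :=
  if y = o then 0 else Q x y

/-- The probability, for the chain with kernel `Q` started at `x`, that the first return to `o`
(at a positive time) occurs after time `n`. -/
noncomputable def returnTail {α : Type*} [DecidableEq α] (Q : α → α → ℝ) (o : α) (n : ℕ) :
    α → ℝ :=
  (transOp (tabooKernel Q o))^[n] 1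

/-- The increments `r` by which `t` decreases also replenish `w`, and they cannot be small unless
`t` is small compared with `w`; hence `w + t` loses a fixed proportion at every step. -/
lemma add_le_mul_pow_of_le_mul_add {w t r : ℕ → ℝ} {ρ c : ℝ} (hρ0 : 0 ≤ ρ) (hρ1 : ρ < 1)
    (hc : 0 ≤ c) (hr : ∀ n, 0 ≤ r n) (hw : ∀ n, w (n + 1) = ρ * (w n + r n))
    (ht : ∀ n, t (n + 1) = t n - r n) (htw : ∀ n, t n ≤ c * (w n + r n)) (n : ℕ) :
    w n + t n ≤ (w 0 + t 0) * ((ρ + c) / (1 + c)) ^ n := by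
  have hc1 : 0 < 1 + c := by positivity
  set κ := (ρ + c) / (1 + c)
  have hκ0 : 0 ≤ κ := by positivity
  have hκ : 1 - ρ = (1 - κ) * (1 + c) := by rw [sub_mul, div_mul_cancel₀ _ hc1.ne']; ring
  have hκ1 : 0 ≤ 1 - κ := (pos_of_mul_pos_left (hκ ▸ sub_pos.2 hρ1) hc1.le).le
  induction n with
  | zero => simp
  | succ n ih =>
    have hloss : w n + t n ≤ (1 + c) * (w n + r n) := by linarith [htw n, hr n]
    calc w (n + 1) + t (n + 1) = w n + t n - (1 - κ) * ((1 + c) * (w n + r n)) := by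
          rw [hw, ht, ← mul_assoc, ← hκ]; ring
      _ ≤ w n + t n - (1 - κ) * (w n + t n) := by gcongr
      _ = κ * (w n + t n) := by ring
      _ ≤ κ * ((w 0 + t 0) * κ ^ n) := mul_le_mul_of_nonneg_left ih hκ0
      _ = (w 0 + t 0) * κ ^ (n + 1) := by ring

lemma sum_range_pow_mul_succ (r : ℕ → ℝ) (ρ : ℝ) (n : ℕ) :
    ∑ k ∈ Finset.range (n + 1), ρ ^ (k + 1) * r (n + 1 - (k + 1)) =
      ρ * (∑ k ∈ Finset.range n, ρ ^ (k + 1) * r (n - (k + 1)) + r n) := by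
  rw [Finset.sum_range_succ', mul_add, Finset.mul_sum]
  simp only [Nat.add_sub_add_right, Nat.sub_zero, pow_succ', pow_zero, mul_one, mul_assoc]

section Taboo

variable {α β : Type*} [DecidableEq β] {Q : α → β → ℝ} {f : β → ℝ}

lemma rowSummable_tabooKernel (hf : RowSummable Q f) (o : β) :
    RowSummable (tabooKernel Q o) f := by
  refine fun x => ((hf x).indicator {o}ᶜ).congr fun y => ?_
  by_cases hy : y = o <;> simp [tabooKernel, hy]

lemma transOp_tabooKernel (hf : RowSummable Q f) (o : β) (x : α) :
    transOp (tabooKernel Q o) f x = transOp Q f x - Q x o * f o := by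
  have h := (hf x).hasSum.update o 0
  rw [zero_sub, neg_add_eq_sub] at h
  refine (h.congr_fun fun y => ?_).tsum_eq
  by_cases hy : y = o <;> simp [tabooKernel, hy]

lemma tabooKernel_nonneg (hQ : ∀ x y, 0 ≤ Q x y) (o : β) (x : α) (y : β) :
    0 ≤ tabooKernel Q o x y := by
  unfold tabooKernel
  split_ifs
  exacts [le_rfl, hQ x y]

end Taboo

section ReturnTail

variable {α : Type*} [DecidableEq α] {Q : α → α → ℝ}

lemma returnTail_zero (o x : α) : returnTail Q o 0 x = 1 := rfl

lemma returnTail_succ (o : α) (n : ℕ) (x : α) :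
    returnTail Q o (n + 1) x = transOp (tabooKernel Q o) (returnTail Q o n) x := by
  rw [returnTail, Function.iterate_succ_apply']
  rfl

namespace IsStochasticKernel

variable (hQ : IsStochasticKernel Q)
include hQ

lemma returnTail_nonneg (o : α) (n : ℕ) (x : α) : 0 ≤ returnTail Q o n x := by
  induction n generalizing x with
  | zero => exact zero_le_one
  | succ n ih =>
    rw [returnTail_succ]
    exact transOp_nonneg (tabooKernel_nonneg hQ.nonneg o) ih x

lemma abs_returnTail_le_one (o : α) (n : ℕ) (x : α) : |returnTail Q o n x| ≤ 1 := by
  rw [abs_of_nonneg (hQ.returnTail_nonneg o n x)]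
  induction n generalizing x with
  | zero => exact le_rfl
  | succ n ih =>
    have habs : ∀ y, |returnTail Q o n y| ≤ 1 := fun y =>
      (abs_of_nonneg (hQ.returnTail_nonneg o n y)).trans_le (ih y)
    rw [returnTail_succ, transOp_tabooKernel (hQ.rowSummable_of_bounded habs)]
    linarith [le_of_abs_le (hQ.abs_transOp_le_const habs x),
      mul_nonneg (hQ.nonneg x o) (hQ.returnTail_nonneg o n o)]

lemma rowSummable_returnTail (o : α) (n : ℕ) : RowSummable Q (returnTail Q o n) :=
  hQ.rowSummable_of_bounded (hQ.abs_returnTail_le_one o n)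

/-- Decomposition according to the last visit to `o` at times `1, …, n`. -/
lemma returnTail_add_sum_nStep_mul (o : α) (n : ℕ) (x : α) :
    returnTail Q o n x +
      ∑ k ∈ Finset.range n, nStep Q (k + 1) x o * returnTail Q o (n - (k + 1)) o = 1 := by
  induction n generalizing x with
  | zero => simp [returnTail_zero]
  | succ n ih =>
    have hterm : ∀ k, RowSummable Q fun y =>
        returnTail Q o (n - (k + 1)) o * nStep Q (k + 1) y o :=
      fun k => (hQ.rowSummable_nStep (k + 1) o).const_mul _
    have hT : transOp Q (returnTail Q o n) x =
        1 - ∑ k ∈ Finset.range n, returnTail Q o (n - (k + 1)) o * nStep Q (k + 2) x o := by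
      rw [funext fun y => eq_sub_of_add_eq (ih y)]
      simp only [mul_comm (nStep Q _ _ o)]
      rw [transOp_sub (hQ.rowSummable_const 1) (RowSummable.sum _ fun k _ => hterm k),
        hQ.transOp_const, transOp_sum _ fun k _ => hterm k]
      simp only [transOp_const_mul, ← nStep_succ]
    rw [returnTail_succ, transOp_tabooKernel (hQ.rowSummable_returnTail o n), hT,
      Finset.sum_range_succ', nStep_one]
    simp only [Nat.add_sub_add_right, Nat.sub_zero, mul_comm (nStep Q _ _ o)]
    ring

/-- One half of Kac's formula: the mean return time to `o` is at most `1 / π o`. -/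
lemma mul_sum_returnTail_le_one {π : α → ℝ} (hπ : IsInvariantLaw Q π) (o : α) (n : ℕ) :
    π o * ∑ k ∈ Finset.range n, returnTail Q o (n - (k + 1)) o ≤ 1 := by
  rw [Finset.mul_sum]
  refine hasSum_le (fun x => ?_)
    (hasSum_sum fun k _ => (hπ.hasSum_mul_nStep hQ (k + 1) o).mul_right _) hπ.hasSum_one
  simp only [mul_assoc, ← Finset.mul_sum]
  refine mul_le_of_le_one_right (hπ.nonneg x) ?_
  linarith [hQ.returnTail_add_sum_nStep_mul o n x, hQ.returnTail_nonneg o n x]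

lemma abs_returnTail_sub_le {π M : α → ℝ} {o : α} {ρ : ℝ}
    (hM : ∀ x n, |nStep Q n x o - π o| ≤ M x * ρ ^ n) (n : ℕ) (x : α) :
    |returnTail Q o n x -
        (1 - π o * ∑ k ∈ Finset.range n, returnTail Q o (n - (k + 1)) o)| ≤
      M x * ∑ k ∈ Finset.range n, ρ ^ (k + 1) * returnTail Q o (n - (k + 1)) o := by
  have hdiff : returnTail Q o n x -
      (1 - π o * ∑ k ∈ Finset.range n, returnTail Q o (n - (k + 1)) o) =
      -∑ k ∈ Finset.range n, (nStep Q (k + 1) x o - π o) * returnTail Q o (n - (k + 1)) o := by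
    simp only [sub_mul, Finset.sum_sub_distrib, ← Finset.mul_sum]
    linarith [hQ.returnTail_add_sum_nStep_mul o n x]
  rw [hdiff, abs_neg, Finset.mul_sum]
  refine (Finset.abs_sum_le_sum_abs _ _).trans (Finset.sum_le_sum fun k _ => ?_)
  have hs := hQ.returnTail_nonneg o (n - (k + 1)) o
  rw [abs_mul, abs_of_nonneg hs, ← mul_assoc]
  exact mul_le_mul_of_nonneg_right (hM x (k + 1)) hs

lemma exists_returnTail_le_pow {π M : α → ℝ} (hπ : IsInvariantLaw Q π) {o : α} (ho : 0 < π o)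
    {ρ : ℝ} (hρ0 : 0 ≤ ρ) (hρ1 : ρ < 1) (hM : ∀ x n, |nStep Q n x o - π o| ≤ M x * ρ ^ n) :
    ∃ κ : ℝ, 0 < κ ∧ κ < 1 ∧ ∃ C : α → ℝ, ∀ n x, returnTail Q o n x ≤ C x * κ ^ n := by
  have hM0 : ∀ x, 0 ≤ M x := fun x => by simpa using (abs_nonneg _).trans (hM x 0)
  set r : ℕ → ℝ := fun n => returnTail Q o n o
  have hr : ∀ n, 0 ≤ r n := fun n => hQ.returnTail_nonneg o n o
  set t : ℕ → ℝ := fun n => 1 - π o * ∑ k ∈ Finset.range n, r (n - (k + 1)) with ht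
  set w : ℕ → ℝ := fun n => ∑ k ∈ Finset.range n, ρ ^ (k + 1) * r (n - (k + 1)) with hw
  have ht0 : ∀ n, 0 ≤ t n := fun n => sub_nonneg.2 (hQ.mul_sum_returnTail_le_one hπ o n)
  have hw0 : ∀ n, 0 ≤ w n := fun n =>
    Finset.sum_nonneg fun k _ => mul_nonneg (pow_nonneg hρ0 _) (hr _)
  have hnear : ∀ n x, |returnTail Q o n x - t n| ≤ M x * w n := hQ.abs_returnTail_sub_le hM
  have ht_succ : ∀ n, t (n + 1) = t n - π o * r n := fun n => by
    have h := sum_range_pow_mul_succ r 1 n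
    simp only [one_pow, one_mul] at h
    simp only [ht, h]
    ring
  have hw_succ : ∀ n, w (n + 1) = ρ * (w n + r n) := sum_range_pow_mul_succ r ρ
  set c := (1 + M o) / π o
  have hc : 0 < c := div_pos (by linarith [hM0 o]) ho
  have htw : ∀ n, t n ≤ c * (π o * w n + π o * r n) := fun n => by
    rw [← mul_add, ← mul_assoc, div_mul_cancel₀ _ ho.ne']
    linarith [neg_le_of_abs_le (hnear n o), hw0 n, mul_nonneg (hM0 o) (hr n),
      show returnTail Q o n o = r n from rfl]
  have hdecay := add_le_mul_pow_of_le_mul_add (w := fun n => π o * w n) hρ0 hρ1 hc.le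
    (fun n => mul_nonneg ho.le (hr n)) (fun n => by rw [hw_succ]; ring) ht_succ htw
  refine ⟨(ρ + c) / (1 + c), by positivity, (div_lt_one (by positivity)).2 (by linarith),
    fun x => 1 + M x / π o, fun n x => ?_⟩
  have hCx : 0 ≤ M x / π o := div_nonneg (hM0 x) ho.le
  calc returnTail Q o n x ≤ t n + M x * w n := by linarith [le_of_abs_le (hnear n x)]
    _ = t n + M x / π o * (π o * w n) := by rw [← mul_assoc, div_mul_cancel₀ _ ho.ne']
    _ ≤ (1 + M x / π o) * (π o * w n + t n) := by
      linarith [mul_nonneg hCx (ht0 n), mul_nonneg ho.le (hw0 n)]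
    _ ≤ (1 + M x / π o) * ((ρ + c) / (1 + c)) ^ n := by
      gcongr
      simpa [ht, hw] using hdecay n

section Comparison

variable {u : α → ℝ} {o : α} {E b c : ℝ}

lemma le_pow_mul_returnTail_add_sum (hu : ∀ x, |u x| ≤ b) (hE : 0 ≤ E)
    (h : ∀ x, u x ≤ E * transOp (tabooKernel Q o) u x + c) (n : ℕ) (x : α) :
    u x ≤ b * E ^ n * returnTail Q o n x +
      ∑ k ∈ Finset.range n, c * E ^ k * returnTail Q o k x := by
  induction n generalizing x with
  | zero => simpa [returnTail_zero] using le_of_abs_le (hu x)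
  | succ n ih =>
    have hs : ∀ (d : ℝ) (k : ℕ), RowSummable (tabooKernel Q o) fun y => d * returnTail Q o k y :=
      fun d k => (rowSummable_tabooKernel (hQ.rowSummable_returnTail o k) o).const_mul d
    have hsum : RowSummable (tabooKernel Q o) fun y =>
        ∑ k ∈ Finset.range n, c * E ^ k * returnTail Q o k y :=
      RowSummable.sum _ fun k _ => hs _ k
    have hT := transOp_mono (tabooKernel_nonneg hQ.nonneg o)
      (rowSummable_tabooKernel (hQ.rowSummable_of_bounded hu) o) ((hs _ n).add hsum) ih x
    rw [transOp_add (hs _ n) hsum, transOp_sum _ fun k _ => hs _ k] at hT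
    simp only [transOp_const_mul, ← returnTail_succ] at hT
    calc u x ≤ E * transOp (tabooKernel Q o) u x + c := h x
      _ ≤ _ := add_le_add_left (mul_le_mul_of_nonneg_left hT hE) c
      _ = _ := by
        rw [Finset.sum_range_succ', mul_add, Finset.mul_sum, returnTail_zero]
        simp only [pow_succ, pow_zero, mul_one, add_assoc]
        congr 1
        · ring
        · congr 1
          exact Finset.sum_congr rfl fun k _ => by ring

lemma le_of_le_mul_transOp_tabooKernel_add (hu : ∀ x, |u x| ≤ b) (hE : 0 ≤ E) (hc : 0 ≤ c)
    (h : ∀ x, u x ≤ E * transOp (tabooKernel Q o) u x + c) {κ : ℝ} (hκ : 0 ≤ κ) (hEκ : E * κ < 1)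
    {C : α → ℝ} (hC : ∀ n x, returnTail Q o n x ≤ C x * κ ^ n) (x : α) :
    u x ≤ c * C x / (1 - E * κ) := by
  have hb : 0 ≤ b := (abs_nonneg _).trans (hu x)
  have hC0 : 0 ≤ C x := by simpa [returnTail_zero] using zero_le_one.trans (hC 0 x)
  have hgeom := hasSum_geometric_of_lt_one (mul_nonneg hE hκ) hEκ
  have hpow : ∀ k, E ^ k * returnTail Q o k x ≤ C x * (E * κ) ^ k := fun k => by
    rw [mul_pow, mul_left_comm]
    exact mul_le_mul_of_nonneg_left (hC k x) (pow_nonneg hE k)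
  have hle : ∀ n, u x ≤ b * C x * (E * κ) ^ n + c * C x / (1 - E * κ) := fun n => by
    refine (hQ.le_pow_mul_returnTail_add_sum hu hE h n x).trans (add_le_add ?_ ?_)
    · rw [mul_assoc, mul_assoc]
      exact mul_le_mul_of_nonneg_left (hpow n) hb
    · refine (Finset.sum_le_sum fun k _ => ?_).trans
        (sum_le_hasSum (Finset.range n) (fun k _ => by positivity) (hgeom.mul_left (c * C x)))
      rw [mul_assoc, mul_assoc]
      exact mul_le_mul_of_nonneg_left (hpow k) hc
  have hlim := ((tendsto_pow_atTop_nhds_zero_of_lt_one (mul_nonneg hE hκ) hEκ).const_mul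
    (b * C x)).add_const (c * C x / (1 - E * κ))
  rw [mul_zero, zero_add] at hlim
  exact ge_of_tendsto' hlim hle

/-- If `W` shrinks at most by the factor `E` per step in the mean, and the return time to `o` has
tails lighter than `E⁻ⁿ`, then `Q W` is controlled by the value of `W` at `o`. -/
lemma transOp_le_of_le_mul_transOp {W : α → ℝ} (hW0 : ∀ x, 0 ≤ W x) (hWb : ∀ x, W x ≤ b)
    (hE : 0 ≤ E) (hW : ∀ x, W x ≤ E * transOp Q W x) {κ : ℝ} (hκ : 0 ≤ κ) (hEκ : E * κ < 1)
    {C : α → ℝ} (hC : ∀ n x, returnTail Q o n x ≤ C x * κ ^ n) (x : α) :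
    transOp Q W x ≤ W o * C x / (1 - E * κ) := by
  have habs : ∀ x, |W x| ≤ b := fun x => (abs_of_nonneg (hW0 x)).trans_le (hWb x)
  have hrow : RowSummable Q W := hQ.rowSummable_of_bounded habs
  have hrowT : RowSummable Q fun x => E * transOp Q W x :=
    (hQ.rowSummable_of_bounded (hQ.abs_transOp_le_const habs)).const_mul E
  refine hQ.le_of_le_mul_transOp_tabooKernel_add (hQ.abs_transOp_le_const habs) hE (hW0 o)
    (fun y => ?_) hκ hEκ hC x
  have hTW := transOp_mono (tabooKernel_nonneg hQ.nonneg o) (rowSummable_tabooKernel hrow o)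
    (rowSummable_tabooKernel hrowT o) hW y
  rw [transOp_const_mul, transOp_tabooKernel hrow] at hTW
  have hQ1 : Q y o ≤ 1 := le_hasSum (hQ.hasSum_one y) o fun z _ => hQ.nonneg y z
  exact (sub_le_iff_le_add.1 hTW).trans (by gcongr; exact mul_le_of_le_one_left (hW0 o) hQ1)

end Comparison

end IsStochasticKernel

end ReturnTail

/-! ### Rows of the chain and jumps of the free walk -/

/-- The joint law, from each phase, of the level increment and of the next phase of the chain away
from level `0`, regarded as a kernel from phases to pairs (increment, phase). -/
def jumpKernel {m : ℕ} (A : ℤ → Matrix (Fin m) (Fin m) ℝ) (j : Fin m) (p : ℤ × Fin m) : ℝ :=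
  A p.1 j p.2

section Rows

variable {m : ℕ} {A B : ℤ → Matrix (Fin m) (Fin m) ℝ} {i : ℕ} {j : Fin m}
  {F : S m → ℝ} {G : ℤ × Fin m → ℝ}

lemma isStochasticKernel_jumpKernel (hA : ∀ k r s, 0 ≤ A k r s) (hphase : PhaseStochastic A) :
    IsStochasticKernel (jumpKernel A) :=
  ⟨fun j p => hA p.1 j p.2, hphase⟩

lemma injective_increment (i : ℕ) :
    Function.Injective fun y : S m => ((y.1 : ℤ) - (i + 1), y.2) := by
  rintro ⟨k, s⟩ ⟨l, t⟩ h
  simpa using h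

lemma P_succ_succ_eq_jumpKernel (i k : ℕ) (j s : Fin m) :
    P A B (i + 1, j) (k + 1, s) = jumpKernel A j (((k + 1 : ℕ) : ℤ) - (i + 1), s) := by
  rw [Nat.cast_succ, add_sub_add_right_eq_sub]
  rfl

lemma P_zero (k : ℕ) (j s : Fin m) : P A B (0, j) (k, s) = B k j s := by
  cases k <;> rfl

lemma summable_P_succ_mul (hJ : IsStochasticKernel (jumpKernel A))
    (hG : Summable fun p => jumpKernel A j p * G p)
    (hFG : ∀ (k : ℕ) s, |F (k + 1, s)| ≤ G ((k + 1 : ℕ) - (i + 1), s)) :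
    Summable fun y => P A B (i + 1, j) y * F y := by
  refine (hG.comp_injective (injective_increment i)).of_norm_bounded_eventually ?_
  refine (Set.finite_range fun s : Fin m => ((0, s) : S m)).subset ?_
  rintro ⟨_ | k, s⟩ hy
  · exact ⟨s, rfl⟩
  · refine absurd (?_ : ‖P A B (i + 1, j) (k + 1, s) * F (k + 1, s)‖ ≤ _) hy
    rw [P_succ_succ_eq_jumpKernel, norm_mul, Real.norm_of_nonneg (hJ.nonneg _ _)]
    exact mul_le_mul_of_nonneg_left (hFG k s) (hJ.nonneg _ _)

lemma transOp_P_succ_le_of_nonpos (hQ : IsStochasticKernel (P A B))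
    (hJ : IsStochasticKernel (jumpKernel A)) (hF : Summable fun y => P A B (i + 1, j) y * F y)
    (hG : Summable fun p => jumpKernel A j p * G p)
    (hFG : ∀ (k : ℕ) s, F (k + 1, s) ≤ G ((k + 1 : ℕ) - (i + 1), s)) (hF0 : ∀ s, F (0, s) ≤ 0)
    (hG0 : ∀ p : ℤ × Fin m, p.1 < -i → 0 ≤ G p) :
    transOp (P A B) F (i + 1, j) ≤ transOp (jumpKernel A) G j := by
  refine hF.tsum_le_tsum_of_inj _ (injective_increment i) ?_ ?_ hG
  · rintro ⟨k, s⟩ hp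
    refine mul_nonneg (hJ.nonneg _ _) (hG0 _ ?_)
    by_contra! hk
    refine hp ⟨((k + (i + 1)).toNat, s), ?_⟩
    simp only [Prod.mk.injEq, and_true]
    lia
  · rintro ⟨_ | k, s⟩
    · refine (mul_nonpos_of_nonneg_of_nonpos (hQ.nonneg _ _) (hF0 s)).trans ?_
      exact mul_nonneg (hJ.nonneg _ _) (hG0 _ (by simp))
    · rw [P_succ_succ_eq_jumpKernel]
      exact mul_le_mul_of_nonneg_left (hFG k s) (hJ.nonneg _ _)

/-- Both rows have mass one, so subtracting `c` reduces to the case where level `0` only helps. -/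
lemma transOp_P_succ_le (hQ : IsStochasticKernel (P A B))
    (hJ : IsStochasticKernel (jumpKernel A)) (hF : Summable fun y => P A B (i + 1, j) y * F y)
    (hG : Summable fun p => jumpKernel A j p * G p) {c : ℝ}
    (hFG : ∀ (k : ℕ) s, F (k + 1, s) ≤ G ((k + 1 : ℕ) - (i + 1), s)) (hF0 : ∀ s, F (0, s) ≤ c)
    (hG0 : ∀ p : ℤ × Fin m, p.1 < -i → c ≤ G p) :
    transOp (P A B) F (i + 1, j) ≤ transOp (jumpKernel A) G j := by
  rw [← sub_le_sub_iff_right c, ← hQ.transOp_sub_const hF, ← hJ.transOp_sub_const hG]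
  refine transOp_P_succ_le_of_nonpos hQ hJ ?_ ?_ (fun k s => sub_le_sub_right (hFG k s) c)
    (fun s => sub_nonpos.2 (hF0 s)) fun p hp => sub_nonneg.2 (hG0 p hp)
  · simpa only [mul_sub] using hF.sub (hQ.rowSummable_const c _)
  · simpa only [mul_sub] using hG.sub (hJ.rowSummable_const c _)

lemma le_transOp_P_succ (hQ : IsStochasticKernel (P A B))
    (hJ : IsStochasticKernel (jumpKernel A)) (hF : Summable fun y => P A B (i + 1, j) y * F y)
    (hG : Summable fun p => jumpKernel A j p * G p) {c : ℝ}
    (hFG : ∀ (k : ℕ) s, G ((k + 1 : ℕ) - (i + 1), s) ≤ F (k + 1, s)) (hF0 : ∀ s, c ≤ F (0, s))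
    (hG0 : ∀ p : ℤ × Fin m, p.1 < -i → G p ≤ c) :
    transOp (jumpKernel A) G j ≤ transOp (P A B) F (i + 1, j) := by
  have h := transOp_P_succ_le (F := fun y => -F y) (G := fun p => -G p) (c := -c) hQ hJ
    (by simpa only [mul_neg] using hF.neg) (by simpa only [mul_neg] using hG.neg)
    (fun k s => neg_le_neg (hFG k s)) (fun s => neg_le_neg (hF0 s))
    fun p hp => neg_le_neg (hG0 p hp)
  rwa [transOp_neg, transOp_neg, neg_le_neg_iff] at h

end Rows

/-! ### Geometric ergodicity forces light tails -/

lemma IsStochasticKernel.tendsto_transOp_exp_of_nonpos {α β : Type*} {Q : α → β → ℝ}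
    (hQ : IsStochasticKernel Q) {X : β → ℝ} (hX : ∀ y, X y ≤ 0) (x : α) :
    Tendsto (fun γ => transOp Q (fun y => Real.exp (γ * X y)) x) (𝓝[>] 0) (𝓝 1) := by
  rw [← (hQ.hasSum_one x).tsum_eq]
  refine tendsto_tsum_of_dominated_convergence (hQ.hasSum_one x).summable (fun y => ?_) ?_
  · have hcont : Continuous fun γ => Q x y * Real.exp (γ * X y) := by fun_prop
    simpa using hcont.continuousWithinAt.tendsto (s := Set.Ioi 0) (x := 0)
  · filter_upwards [self_mem_nhdsWithin] with γ hγ y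
    rw [norm_mul, Real.norm_of_nonneg (hQ.nonneg x y), Real.norm_of_nonneg (Real.exp_nonneg _)]
    exact mul_le_of_le_one_right (hQ.nonneg x y)
      (Real.exp_le_one_iff.2 (mul_nonpos_of_nonneg_of_nonpos (Set.mem_Ioi.1 hγ).le (hX y)))

lemma IsStochasticKernel.exists_one_le_mul_transOp_exp {α β : Type*} [Finite α] {Q : α → β → ℝ}
    (hQ : IsStochasticKernel Q) {X : β → ℝ} (hX : ∀ y, X y ≤ 0) {E : ℝ} (hE : 1 < E) :
    ∃ γ > 0, ∀ x, 1 ≤ E * transOp Q (fun y => Real.exp (γ * X y)) x := by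
  have hlt : ∀ᶠ γ in 𝓝[>] (0 : ℝ), ∀ x, 1 < E * transOp Q (fun y => Real.exp (γ * X y)) x :=
    eventually_all.2 fun x =>
      ((hQ.tendsto_transOp_exp_of_nonpos hX x).const_mul E).eventually_const_lt (by rwa [mul_one])
  obtain ⟨γ, h, hγ⟩ := (hlt.and self_mem_nhdsWithin).exists
  exact ⟨γ, hγ, fun x => (h x).le⟩

/-- The bounded test function `exp (γ min(i, N))` of the level `i`. -/
noncomputable def truncatedExp {m : ℕ} (γ : ℝ) (N : ℕ) (y : S m) : ℝ :=
  Real.exp (γ * min (y.1 : ℝ) N)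

section LightTails

variable {m : ℕ} {A B : ℤ → Matrix (Fin m) (Fin m) ℝ} {γ E : ℝ}

lemma one_le_truncatedExp (hγ : 0 ≤ γ) (N : ℕ) (y : S m) : 1 ≤ truncatedExp γ N y :=
  Real.one_le_exp (by positivity)

lemma truncatedExp_le (hγ : 0 ≤ γ) (N : ℕ) (y : S m) : truncatedExp γ N y ≤ Real.exp (γ * N) :=
  Real.exp_le_exp.2 (mul_le_mul_of_nonneg_left (min_le_right _ _) hγ)

lemma rowSummable_truncatedExp {α : Type*} {Q : α → S m → ℝ} (hQ : IsStochasticKernel Q)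
    (hγ : 0 ≤ γ) (N : ℕ) : RowSummable Q (truncatedExp γ N) :=
  hQ.rowSummable_of_bounded fun y =>
    (abs_of_nonneg (Real.exp_nonneg _)).trans_le (truncatedExp_le hγ N y)

lemma truncatedExp_mul_transOp_le (hQ : IsStochasticKernel (P A B))
    (hJ : IsStochasticKernel (jumpKernel A)) (hγ : 0 ≤ γ) (N i : ℕ) (j : Fin m) :
    truncatedExp γ N (i + 1, j) * transOp (jumpKernel A) (fun p => Real.exp (γ * min (p.1 : ℝ) 0)) j
      ≤ transOp (P A B) (truncatedExp γ N) (i + 1, j) := by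
  have hexp : RowSummable (jumpKernel A) fun p => Real.exp (γ * min (p.1 : ℝ) 0) :=
    hJ.rowSummable_of_bounded fun p => (abs_of_nonneg (Real.exp_nonneg _)).trans_le <|
      Real.exp_le_one_iff.2 (mul_nonpos_of_nonneg_of_nonpos hγ (min_le_right _ _))
  rw [← transOp_const_mul]
  refine le_transOp_P_succ hQ hJ (rowSummable_truncatedExp hQ hγ N _) (hexp.const_mul _ j)
    (fun k s => ?_) (fun s => one_le_truncatedExp hγ N (0, s)) fun p hp => ?_
  · rw [truncatedExp, truncatedExp, ← Real.exp_add, Real.exp_le_exp, ← mul_add]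
    refine mul_le_mul_of_nonneg_left ?_ hγ
    push_cast
    refine le_min ?_ ?_
    · linarith [min_le_left ((i : ℝ) + 1) N, min_le_left ((k : ℝ) + 1 - (i + 1)) 0]
    · linarith [min_le_right ((i : ℝ) + 1) N, min_le_right ((k : ℝ) + 1 - (i + 1)) 0]
  · rw [truncatedExp, ← Real.exp_add, Real.exp_le_one_iff, ← mul_add]
    refine mul_nonpos_of_nonneg_of_nonpos hγ ?_
    have hp' : (p.1 : ℝ) + 1 ≤ -i := by exact_mod_cast hp
    push_cast
    linarith [min_le_left ((i : ℝ) + 1) N, min_le_left (p.1 : ℝ) 0]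

lemma truncatedExp_le_mul_transOp (hQ : IsStochasticKernel (P A B))
    (hJ : IsStochasticKernel (jumpKernel A)) (hγ : 0 ≤ γ) (hE : 1 ≤ E)
    (h : ∀ j, 1 ≤ E * transOp (jumpKernel A) (fun p => Real.exp (γ * min (p.1 : ℝ) 0)) j)
    (N : ℕ) : ∀ x, truncatedExp γ N x ≤ E * transOp (P A B) (truncatedExp γ N) x
  | (0, j) => by
    have hone := transOp_mono hQ.nonneg (hQ.rowSummable_const 1)
      (rowSummable_truncatedExp hQ hγ N) (one_le_truncatedExp hγ N) (0, j)
    rw [hQ.transOp_const] at hone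
    simpa [truncatedExp] using one_le_mul_of_one_le_of_one_le hE hone
  | (i + 1, j) => calc
      truncatedExp γ N (i + 1, j)
        ≤ truncatedExp γ N (i + 1, j) *
            (E * transOp (jumpKernel A) (fun p => Real.exp (γ * min (p.1 : ℝ) 0)) j) :=
          le_mul_of_one_le_right (Real.exp_nonneg _) (h j)
      _ ≤ E * transOp (P A B) (truncatedExp γ N) (i + 1, j) := by
          rw [mul_left_comm]
          exact mul_le_mul_of_nonneg_left (truncatedExp_mul_transOp_le hQ hJ hγ N i j)
            (zero_le_one.trans hE)

lemma summable_mul_exp_level_of_transOp_le {α : Type*} {Q : α → S m → ℝ}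
    (hQ : IsStochasticKernel Q) (hγ : 0 ≤ γ) {x : α} {c : ℝ}
    (hc : ∀ N, transOp Q (truncatedExp γ N) x ≤ c) :
    Summable fun y => Q x y * Real.exp (γ * y.1) := by
  refine summable_of_sum_le (c := c) (fun y => mul_nonneg (hQ.nonneg x y) (Real.exp_nonneg _))
    fun u => ?_
  set N := u.sup Prod.fst
  calc ∑ y ∈ u, Q x y * Real.exp (γ * y.1)
      = ∑ y ∈ u, Q x y * truncatedExp γ N y := Finset.sum_congr rfl fun y hy => by
        rw [truncatedExp, min_eq_left (Nat.cast_le.2 (Finset.le_sup (f := Prod.fst) hy))]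
    _ ≤ transOp Q (truncatedExp γ N) x :=
        (rowSummable_truncatedExp hQ hγ N x).sum_le_tsum u
          fun y _ => mul_nonneg (hQ.nonneg x y) (Real.exp_nonneg _)
    _ ≤ c := hc N

lemma lightMat_of_summable_mul_exp_level (hA : ∀ k r s, 0 ≤ A k r s) (hγ : 0 < γ)
    (h : ∀ x, Summable fun y => P A B x y * Real.exp (γ * y.1)) : LightMat A ∧ LightMat B := by
  refine ⟨fun r s => ⟨γ, hγ, ?_⟩, fun r s => ⟨γ, hγ, ?_⟩⟩
  · have hinj : Function.Injective fun k : ℕ => ((k + 1 + 1, s) : S m) := fun a b hab => by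
      simpa using hab
    refine ((h (0 + 1, r)).comp_injective hinj).of_nonneg_of_le
      (fun k => mul_nonneg (hA _ _ _) (Real.exp_nonneg _)) fun k => ?_
    simp only [Function.comp_apply, P, Nat.cast_add, Nat.cast_one, Nat.cast_zero, sub_zero]
    exact mul_le_mul_of_nonneg_left (Real.exp_le_exp.2 (by nlinarith)) (hA _ _ _)
  · have hinj : Function.Injective fun k : ℕ => ((k + 1, s) : S m) := fun a b hab => by
      simpa using hab
    refine ((h (0, r)).comp_injective hinj).congr fun k => ?_
    simp [P_zero]

theorem IsGeometricallyErgodic.lightMat {π : S m → ℝ} {o : S m}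
    (hgeo : IsGeometricallyErgodic (P A B) π) (hQ : IsStochasticKernel (P A B))
    (hπ : IsInvariantLaw (P A B) π) (ho : 0 < π o) (hA : ∀ k r s, 0 ≤ A k r s)
    (hphase : PhaseStochastic A) : LightMat A ∧ LightMat B := by
  obtain ⟨ρ, hρ0, hρ1, M, hM⟩ := hgeo
  obtain ⟨κ, hκ0, hκ1, C, hC⟩ :=
    hQ.exists_returnTail_le_pow hπ ho hρ0 hρ1 (M := fun x => M x o) fun x n => hM x o n
  obtain ⟨E, hE1, hEκ⟩ : ∃ E : ℝ, 1 < E ∧ E * κ < 1 := by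
    obtain ⟨E, hE1, hE⟩ := exists_between ((one_lt_inv₀ hκ0).2 hκ1)
    exact ⟨E, hE1, (lt_inv_mul_iff₀' hκ0).1 (by rwa [mul_one])⟩
  have hJ := isStochasticKernel_jumpKernel hA hphase
  obtain ⟨γ, hγ, hγE⟩ := hJ.exists_one_le_mul_transOp_exp
    (X := fun p : ℤ × Fin m => min (p.1 : ℝ) 0) (fun p => min_le_right _ _) hE1
  have hE0 : 0 ≤ E := zero_le_one.trans hE1.le
  refine lightMat_of_summable_mul_exp_level hA hγ fun x =>
    summable_mul_exp_level_of_transOp_le hQ hγ.le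
      (c := Real.exp (γ * o.1) * C x / (1 - E * κ)) fun N => ?_
  refine (hQ.transOp_le_of_le_mul_transOp (fun y => Real.exp_nonneg _) (truncatedExp_le hγ.le N)
    hE0 (truncatedExp_le_mul_transOp hQ hJ hγ.le hE1.le hγE N) hκ0.le hEκ hC x).trans ?_
  have hCx : 0 ≤ C x := zero_le_one.trans (by simpa [returnTail_zero] using hC 0 x)
  refine div_le_div_of_nonneg_right ?_ (sub_nonneg.2 hEκ.le)
  gcongr
  exact min_le_left _ _

end LightTails

/-! ### The Poisson equation of an irreducible stochastic matrix -/

section Poisson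

open Matrix

variable {ι : Type*} [Fintype ι] [DecidableEq ι] {M : Matrix ι ι ℝ} {g d : ι → ℝ} {σ : ℝ}

lemma pow_mulVec_le (hM : ∀ i j, 0 ≤ M i j) (hg : M *ᵥ g ≤ g) (n : ℕ) : (M ^ n) *ᵥ g ≤ g := by
  induction n with
  | zero => simp
  | succ n ih =>
    rw [pow_succ', ← mulVec_mulVec]
    exact le_trans (fun i => dotProduct_le_dotProduct_of_nonneg_left ih (hM i)) hg

lemma eq_of_mulVec_le (hM : M ∈ rowStochastic ℝ ι) (hirr : ∀ i j, ∃ n, 0 < (M ^ n) i j)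
    (hg : M *ᵥ g ≤ g) (i j : ι) : g i = g j := by
  have : Nonempty ι := ⟨i⟩
  obtain ⟨a, ha⟩ := Finite.exists_min g
  suffices h : ∀ s, g s = g a from (h i).trans (h j).symm
  intro s
  obtain ⟨n, hn⟩ := hirr a s
  obtain ⟨hMn, hone⟩ := mem_rowStochastic_iff_sum.1 (pow_mem hM n)
  have hmean : ∑ t, (M ^ n) a t * (g t - g a) ≤ 0 := by
    simp only [mul_sub, Finset.sum_sub_distrib, ← Finset.sum_mul, hone, one_mul]
    exact sub_nonpos.2 (pow_mulVec_le hM.1 hg n a)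
  have hterm := (Finset.single_le_sum (fun t _ => mul_nonneg (hMn a t) (sub_nonneg.2 (ha t)))
    (Finset.mem_univ s)).trans hmean
  exact le_antisymm (sub_nonpos.1 (nonpos_of_mul_nonpos_right hterm hn)) (ha s)

lemma eq_of_add_mulVec_eq (hM : M ∈ rowStochastic ℝ ι) (hirr : ∀ i j, ∃ n, 0 < (M ^ n) i j)
    (hd : ∀ i, 0 ≤ d i) (hσ : σ ≤ 0) (h : ∀ i, d i + (M *ᵥ g) i = g i + σ) (i : ι) :
    d i = σ ∧ ∀ j, g j = g i := by
  have hconst := eq_of_mulVec_le hM hirr (g := g) fun i => by linarith [h i, hd i]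
  have hfix : (M *ᵥ g) i = g i := by
    rw [mulVec_eq_sum]
    simp [hconst _ i, ← Finset.mul_sum, sum_row_of_mem_rowStochastic hM]
  exact ⟨by linarith [h i], fun j => hconst j i⟩

/-- The Poisson operator `g ↦ g - M g + g(z) 1`. The rank-one term, which depends on the choice of
a state `z`, makes it invertible for irreducible stochastic `M`. -/
def poissonOp (M : Matrix ι ι ℝ) (z : ι) : (ι → ℝ) →ₗ[ℝ] (ι → ℝ) :=
  LinearMap.id - M.mulVecLin + (LinearMap.proj z).smulRight 1

omit [DecidableEq ι] in
lemma poissonOp_apply (z : ι) (g : ι → ℝ) (i : ι) :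
    poissonOp M z g i = g i - (M *ᵥ g) i + g z := by
  simp [poissonOp]

lemma injective_poissonOp (hM : M ∈ rowStochastic ℝ ι) (hirr : ∀ i j, ∃ n, 0 < (M ^ n) i j)
    (z : ι) : Function.Injective (poissonOp M z) := by
  refine (injective_iff_map_eq_zero _).2 fun g hg => ?_
  have hg' : ∀ i, g i - (M *ᵥ g) i + g z = 0 := fun i => by
    rw [← poissonOp_apply, hg, Pi.zero_apply]
  suffices h : 0 = g z ∧ ∀ j, g j = g z from funext fun j => (h.2 j).trans h.1.symm
  rcases le_total (g z) 0 with hz | hz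
  · refine eq_of_add_mulVec_eq hM hirr (d := fun _ => 0) (fun _ => le_rfl) hz (fun i => ?_) z
    linarith [hg' i]
  · have h := eq_of_add_mulVec_eq hM hirr (d := fun _ => 0) (g := -g) (σ := -g z)
      (fun _ => le_rfl) (neg_nonpos.2 hz)
      (fun i => by simp only [mulVec_neg, Pi.neg_apply]; linarith [hg' i]) z
    exact ⟨by linarith [h.1], fun j => neg_injective (h.2 j)⟩

lemma exists_poisson [Nonempty ι] (hM : M ∈ rowStochastic ℝ ι)
    (hirr : ∀ i j, ∃ n, 0 < (M ^ n) i j) :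
    ∃ ν : ι → ℝ, (∀ i, 0 < ν i) ∧
      ∀ d : ι → ℝ, ∃ g : ι → ℝ, ∀ i, d i + (M *ᵥ g) i = g i + ∑ j, ν j * d j := by
  obtain ⟨z⟩ := ‹Nonempty ι›
  let e := LinearEquiv.ofInjectiveEndo _ (injective_poissonOp hM hirr z)
  have he : ∀ d i, d i + (M *ᵥ e.symm d) i = e.symm d i + e.symm d z := fun d i => by
    have h : poissonOp M z (e.symm d) i = d i := congrFun (e.apply_symm_apply d) i
    rw [poissonOp_apply] at h
    linarith
  refine ⟨fun j => e.symm (Pi.single j 1) z, fun j => ?_, fun d => ⟨e.symm d, fun i => ?_⟩⟩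
  · by_contra! hneg
    have hsingle : 0 ≤ (Pi.single j 1 : ι → ℝ) := Pi.single_nonneg.2 zero_le_one
    have h := (eq_of_add_mulVec_eq hM hirr hsingle hneg (he (Pi.single j 1)) j).1
    rw [Pi.single_eq_same] at h
    linarith
  · rw [he]
    congr 1
    conv_lhs => rw [← (Pi.basisFun ℝ ι).sum_repr d]
    simp [mul_comm]

end Poisson

/-! ### The sign of the mean drift -/

section Truncation

variable {β : Type*} {w X : β → ℝ}

lemma summable_mul_max_neg (hw : ∀ y, 0 ≤ w y) (hs : Summable w)
    (hpos : Summable fun y => w y * max (X y) 0) (K : ℕ) :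
    Summable fun y => w y * max (X y) (-K) := by
  refine (hpos.add (hs.mul_right (K : ℝ))).of_norm_bounded fun y => ?_
  rw [norm_mul, Real.norm_of_nonneg (hw y), ← mul_add]
  refine mul_le_mul_of_nonneg_left (abs_le.2 ⟨?_, max_le ?_ ?_⟩) (hw y)
  · linarith [le_max_right (X y) (-K), le_max_right (X y) 0]
  · exact (le_max_left _ _).trans (le_add_of_nonneg_right K.cast_nonneg)
  · linarith [le_max_right (X y) 0, (K.cast_nonneg : (0 : ℝ) ≤ K)]

lemma summable_mul_abs_of_tsum_max_nonneg (hw : ∀ y, 0 ≤ w y) (hs : Summable w)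
    (hpos : Summable fun y => w y * max (X y) 0)
    (h : ∀ K : ℕ, 0 ≤ ∑' y, w y * max (X y) (-K)) : Summable fun y => w y * |X y| := by
  suffices hneg : Summable fun y => w y * max (-X y) 0 by
    refine (hpos.add hneg).congr fun y => ?_
    rw [← mul_add, max_zero_add_max_neg_zero_eq_abs_self]
  refine summable_of_sum_le (c := ∑' y, w y * max (X y) 0)
    (fun y => mul_nonneg (hw y) (le_max_right _ _)) fun u => ?_
  set K := u.sup fun y => ⌈-X y⌉₊
  have hmax := summable_mul_max_neg hw hs hpos K
  have hK : ∀ y ∈ u, -X y ≤ K := fun y hy => (Nat.le_ceil _).trans <|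
    Nat.cast_le.2 (Finset.le_sup (f := fun y => ⌈-X y⌉₊) hy)
  calc ∑ y ∈ u, w y * max (-X y) 0
      = ∑ y ∈ u, (w y * max (X y) 0 - w y * max (X y) (-K)) := Finset.sum_congr rfl fun y hy => by
        rw [max_eq_left (neg_le.1 (hK y hy)), ← mul_sub]
        congr 1
        linarith [max_zero_sub_max_neg_zero_eq_self (X y)]
    _ ≤ ∑' y, (w y * max (X y) 0 - w y * max (X y) (-K)) :=
        (hpos.sub hmax).sum_le_tsum u fun y _ => sub_nonneg.2 <| mul_le_mul_of_nonneg_left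
          (max_le_max_left _ (neg_nonpos.2 K.cast_nonneg)) (hw y)
    _ ≤ ∑' y, w y * max (X y) 0 := by
        rw [hpos.tsum_sub hmax]
        exact sub_le_self _ (h K)

lemma tsum_mul_nonneg_of_tsum_max_nonneg (hw : ∀ y, 0 ≤ w y)
    (habs : Summable fun y => w y * |X y|) (h : ∀ K : ℕ, 0 ≤ ∑' y, w y * max (X y) (-K)) :
    0 ≤ ∑' y, w y * X y := by
  refine ge_of_tendsto' (tendsto_tsum_of_dominated_convergence (𝓕 := atTop) habs (fun y => ?_)
    (.of_forall fun K y => ?_)) h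
  · refine tendsto_const_nhds.congr' ?_
    filter_upwards [eventually_ge_atTop ⌈-X y⌉₊] with K hK
    rw [max_eq_left (neg_le.1 (Nat.ceil_le.1 hK))]
  · rw [norm_mul, Real.norm_of_nonneg (hw y)]
    refine mul_le_mul_of_nonneg_left (abs_le.2 ⟨?_, ?_⟩) (hw y)
    · exact (neg_abs_le _).trans (le_max_left _ _)
    · exact max_le (le_abs_self _) ((neg_nonpos.2 K.cast_nonneg).trans (abs_nonneg _))

end Truncation

section Modulated

open Matrix

variable {ι β : Type*} [Fintype ι] {J : ι → β → ℝ} {X : β → ℝ} {φ : β → ι} {M : Matrix ι ι ℝ}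
  {ν : ι → ℝ}

lemma hasSum_sum_mul_transOp (ν : ι → ℝ) {f : β → ℝ} (hf : RowSummable J f) :
    HasSum (fun y => (∑ j, ν j * J j y) * f y) (∑ j, ν j * transOp J f j) := by
  simp only [Finset.sum_mul, mul_assoc]
  exact hasSum_sum fun j _ => (hf j).hasSum.mul_left (ν j)

lemma rowSummable_abs_and_nonneg_of_truncated_nonneg (hJ : IsStochasticKernel J)
    (hν : ∀ j, 0 < ν j) (hpos : RowSummable J fun y => max (X y) 0)
    (h : ∀ K : ℕ, 0 ≤ ∑ j, ν j * transOp J (fun y => max (X y) (-K)) j) :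
    RowSummable J (fun y => |X y|) ∧ 0 ≤ ∑ j, ν j * transOp J X j := by
  set w : β → ℝ := fun y => ∑ j, ν j * J j y
  have hw : ∀ y, 0 ≤ w y :=
    fun y => Finset.sum_nonneg fun j _ => mul_nonneg (hν j).le (hJ.nonneg j y)
  have hws : Summable w := by
    simpa using (hasSum_sum_mul_transOp ν (hJ.rowSummable_const 1)).summable
  have hwpos := (hasSum_sum_mul_transOp ν hpos).summable
  have hmax : ∀ K : ℕ, 0 ≤ ∑' y, w y * max (X y) (-K) := fun K => by
    rw [(hasSum_sum_mul_transOp ν fun j =>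
      summable_mul_max_neg (hJ.nonneg j) (hJ.hasSum_one j).summable (hpos j) K).tsum_eq]
    exact h K
  have habs := summable_mul_abs_of_tsum_max_nonneg hw hws hwpos hmax
  have hJabs : RowSummable J fun y => |X y| := fun j => by
    refine (habs.mul_left (ν j)⁻¹).of_nonneg_of_le
      (fun y => mul_nonneg (hJ.nonneg j y) (abs_nonneg _)) fun y => ?_
    rw [← mul_assoc]
    refine mul_le_mul_of_nonneg_right ((le_inv_mul_iff₀ (hν j)).2 ?_) (abs_nonneg _)
    exact Finset.single_le_sum (f := fun j => ν j * J j y)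
      (fun j _ => mul_nonneg (hν j).le (hJ.nonneg j y)) (Finset.mem_univ j)
  refine ⟨hJabs, ?_⟩
  rw [← (hasSum_sum_mul_transOp ν (hJ.rowSummable_of_abs_le hJabs fun _ => le_rfl)).tsum_eq]
  exact tsum_mul_nonneg_of_tsum_max_nonneg hw habs hmax

variable [DecidableEq ι]

lemma mem_rowStochastic_of_transOp_eq (hJ : IsStochasticKernel J)
    (hM : ∀ g j, transOp J (fun y => g (φ y)) j = (M *ᵥ g) j) : M ∈ rowStochastic ℝ ι := by
  refine ⟨fun i j => ?_, funext fun j => ?_⟩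
  · have h := hM (Pi.single j 1) i
    rw [mulVec_single_one] at h
    have hsingle : 0 ≤ (Pi.single j 1 : ι → ℝ) := Pi.single_nonneg.2 zero_le_one
    exact (transOp_nonneg hJ.nonneg (fun y => hsingle (φ y)) i).trans_eq h
  · exact (hM 1 j).symm.trans (hJ.transOp_const 1 j)

theorem exists_negative_drift_or_nonneg_drift [Nonempty ι] (hJ : IsStochasticKernel J)
    (hpos : RowSummable J fun y => max (X y) 0)
    (hM : ∀ g j, transOp J (fun y => g (φ y)) j = (M *ᵥ g) j)
    (hirr : ∀ i j, ∃ n, 0 < (M ^ n) i j) :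
    (∃ (K : ℕ) (g : ι → ℝ) (σ : ℝ), σ < 0 ∧
      ∀ j, transOp J (fun y => max (X y) (-K) + g (φ y)) j = g j + σ) ∨
    RowSummable J (fun y => |X y|) ∧ ∃ (g : ι → ℝ) (σ : ℝ), 0 ≤ σ ∧
      ∀ j, transOp J (fun y => X y + g (φ y)) j = g j + σ := by
  obtain ⟨ν, hν, hpoisson⟩ := exists_poisson (mem_rowStochastic_of_transOp_eq hJ hM) hirr
  have hsol : ∀ Y : β → ℝ, RowSummable J Y → ∃ g : ι → ℝ, ∀ j,
      transOp J (fun y => Y y + g (φ y)) j = g j + ∑ i, ν i * transOp J Y i := fun Y hY => by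
    obtain ⟨g, hg⟩ := hpoisson (transOp J Y)
    refine ⟨g, fun j => ?_⟩
    rw [transOp_add hY (hJ.rowSummable_of_bounded fun y => norm_le_pi_norm g (φ y)), hM, hg]
  by_cases hneg : ∃ K : ℕ, ∑ j, ν j * transOp J (fun y => max (X y) (-K)) j < 0
  · obtain ⟨K, hK⟩ := hneg
    obtain ⟨g, hg⟩ := hsol _ fun j =>
      summable_mul_max_neg (hJ.nonneg j) (hJ.hasSum_one j).summable (hpos j) K
    exact .inl ⟨K, g, _, hK, hg⟩
  · push Not at hneg
    obtain ⟨habs, hσ⟩ := rowSummable_abs_and_nonneg_of_truncated_nonneg hJ hν hpos hneg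
    obtain ⟨g, hg⟩ := hsol X (hJ.rowSummable_of_abs_le habs fun _ => le_rfl)
    exact .inr ⟨habs, g, _, hσ, hg⟩

end Modulated

lemma transOp_jumpKernel_snd {m : ℕ} {A : ℤ → Matrix (Fin m) (Fin m) ℝ}
    (hJ : IsStochasticKernel (jumpKernel A)) (g : Fin m → ℝ) (j : Fin m) :
    transOp (jumpKernel A) (fun p => g p.2) j = (matA A).mulVec g j := by
  have hs := (Equiv.prodComm (Fin m) ℤ).summable_iff.2 <|
    hJ.rowSummable_of_bounded (fun p : ℤ × Fin m => norm_le_pi_norm g p.2) j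
  calc transOp (jumpKernel A) (fun p => g p.2) j
      = ∑' q : Fin m × ℤ, A q.2 j q.1 * g q.1 := ((Equiv.prodComm (Fin m) ℤ).tsum_eq _).symm
    _ = ∑' s, ∑' k : ℤ, A k j s * g s := hs.tsum_prod
    _ = (matA A).mulVec g j := by
        rw [tsum_fintype]
        exact Finset.sum_congr rfl fun s _ => tsum_mul_right

/-! ### Subharmonic functions of a positive recurrent chain -/

section Subharmonic

variable {α : Type*} {Q : α → α → ℝ} {π f : α → ℝ} {C : ℝ}

/-- Fatou's lemma: only the negative parts of `D N` need to be controlled. -/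
lemma mul_nonpos_of_tendsto_of_hasSum_zero {w d : α → ℝ} {D : ℕ → α → ℝ} (hw : ∀ x, 0 ≤ w x)
    (hs : Summable w) (hlim : ∀ x, Tendsto (D · x) atTop (𝓝 (d x))) (hd : ∀ x, 0 ≤ d x)
    (hC : ∀ N x, -C ≤ D N x) (hsum : ∀ N, HasSum (fun x => w x * D N x) 0) (x : α) :
    w x * d x ≤ 0 := by
  have hbound : ∀ N y, ‖w y * min (D N y) 0‖ ≤ w y * |C| := fun N y => by
    rw [norm_mul, Real.norm_of_nonneg (hw y)]
    refine mul_le_mul_of_nonneg_left (abs_le.2 ⟨le_min ?_ ?_, ?_⟩) (hw y)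
    · exact (neg_le_neg (le_abs_self C)).trans (hC N y)
    · exact neg_nonpos.2 (abs_nonneg C)
    · exact (min_le_right _ _).trans (abs_nonneg C)
  have hmin : ∀ y, Tendsto (fun N => min (D N y) 0) atTop (𝓝 0) := fun y => by
    simpa only [min_eq_right (hd y)] using (hlim y).min (tendsto_const_nhds (x := 0))
  have htsum : Tendsto (fun N => ∑' y, w y * min (D N y) 0) atTop (𝓝 0) := by
    simpa using tendsto_tsum_of_dominated_convergence (hs.mul_right |C|)
      (fun y => (hmin y).const_mul (w y)) (.of_forall fun N y => hbound N y)
  have hterm : ∀ N, w x * D N x - w x * min (D N x) 0 ≤ 0 - ∑' y, w y * min (D N y) 0 := fun N =>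
    le_hasSum ((hsum N).sub ((hs.mul_right |C|).of_norm_bounded (hbound N)).hasSum) x fun y _ =>
      sub_nonneg.2 (mul_le_mul_of_nonneg_left (min_le_left _ _) (hw y))
  simpa using le_of_tendsto_of_tendsto' (((hlim x).const_mul (w x)).sub ((hmin x).const_mul (w x)))
    (htsum.const_sub 0) hterm

lemma tendsto_min_natCast (a : ℝ) : Tendsto (fun N : ℕ => min a N) atTop (𝓝 a) := by
  refine tendsto_const_nhds.congr' ?_
  filter_upwards [eventually_ge_atTop ⌈a⌉₊] with N hN
  rw [min_eq_left (Nat.ceil_le.1 hN)]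

lemma tendsto_transOp_min_natCast (hQ : IsStochasticKernel Q) (h0 : ∀ x, 0 ≤ f x)
    (hf : RowSummable Q f) (x : α) :
    Tendsto (fun N : ℕ => transOp Q (fun y => min (f y) N) x) atTop (𝓝 (transOp Q f x)) :=
  tendsto_tsum_of_dominated_convergence (hf x)
    (fun y => (tendsto_min_natCast (f y)).const_mul (Q x y))
    (.of_forall fun N => hQ.norm_mul_le_of_abs_le (fun y => by
      rw [abs_of_nonneg (le_min (h0 y) N.cast_nonneg)]
      exact min_le_left _ _) x)

theorem IsInvariantLaw.transOp_le_of_subharmonic (hπ : IsInvariantLaw Q π)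
    (hQ : IsStochasticKernel Q) (h0 : ∀ x, 0 ≤ f x) (hf : RowSummable Q f)
    (hsub : ∀ x, f x ≤ transOp Q f x)
    (hC : ∀ (N : ℕ) x, min (f x) N - C ≤ transOp Q (fun y => min (f y) N) x)
    {x : α} (hx : 0 < π x) : transOp Q f x ≤ f x := by
  have hmin0 : ∀ (N : ℕ) y, 0 ≤ min (f y) N := fun N y => le_min (h0 y) N.cast_nonneg
  have h := mul_nonpos_of_tendsto_of_hasSum_zero
    (D := fun N y => transOp Q (fun z => min (f z) N) y - min (f y) N) (C := C)
    hπ.nonneg hπ.hasSum_one.summable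
    (fun y => (tendsto_transOp_min_natCast hQ h0 hf y).sub (tendsto_min_natCast (f y)))
    (fun y => sub_nonneg.2 (hsub y)) (fun N y => by linarith [hC N y])
    (fun N => by
      have hs := hπ.summable_mul_of_bounded fun y =>
        (abs_of_nonneg (hmin0 N y)).trans_le (min_le_right _ _)
      simpa only [mul_sub, sub_self] using
        (hπ.hasSum_mul_transOp hQ (hmin0 N) fun y => min_le_right _ _).sub hs.hasSum) x
  exact sub_nonpos.1 (nonpos_of_mul_nonpos_right h hx)

end Subharmonic

/-! ### Positive recurrence forces a negative drift -/

section CorrectedLevel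

variable {m : ℕ} {A B : ℤ → Matrix (Fin m) (Fin m) ℝ} {π : S m → ℝ} {g : Fin m → ℝ} {σ : ℝ}

lemma rowSummable_level (hJ : IsStochasticKernel (jumpKernel A))
    (hX : RowSummable (jumpKernel A) fun p => max (p.1 : ℝ) 0)
    (hB : ∀ j, Summable fun y => P A B (0, j) y * (y.1 : ℝ)) :
    RowSummable (P A B) fun y => (y.1 : ℝ) := by
  rintro ⟨_ | i, j⟩
  · exact hB j
  · refine summable_P_succ_mul hJ ((hX.add (hJ.rowSummable_const (i + 1 : ℝ))) j) fun k s => ?_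
    rw [Nat.abs_cast]
    push_cast
    linarith [le_max_left ((k : ℝ) + 1 - (i + 1)) 0]

/-- The level corrected by a function `g` of the phase and reflected at zero. The shift by `‖g‖`
makes it vanish on level `0`. -/
def correctedLevel (g : Fin m → ℝ) (y : S m) : ℝ := max (y.1 + g y.2 - ‖g‖) 0

lemma correctedLevel_nonneg (g : Fin m → ℝ) (y : S m) : 0 ≤ correctedLevel g y := le_max_right _ _

lemma abs_apply_le_norm (g : Fin m → ℝ) (s : Fin m) : |g s| ≤ ‖g‖ := norm_le_pi_norm g s

lemma correctedLevel_le_level (g : Fin m → ℝ) (y : S m) : correctedLevel g y ≤ y.1 :=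
  max_le (by linarith [(abs_le.1 (abs_apply_le_norm g y.2)).2]) y.1.cast_nonneg

lemma correctedLevel_zero (g : Fin m → ℝ) (s : Fin m) : correctedLevel g (0, s) = 0 :=
  le_antisymm ((correctedLevel_le_level g _).trans_eq Nat.cast_zero) (correctedLevel_nonneg g _)

lemma correctedLevel_sub_le (g : Fin m → ℝ) (x y : S m) :
    correctedLevel g x - (2 * ‖g‖ + |(y.1 : ℝ) - x.1|) ≤ correctedLevel g y := by
  have hx := abs_le.1 (abs_apply_le_norm g x.2)
  have hy := abs_le.1 (abs_apply_le_norm g y.2)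
  have hyx := abs_le.1 (le_refl |(y.1 : ℝ) - x.1|)
  rw [sub_le_iff_le_add]
  refine max_le ?_ ?_
  · have hle : y.1 + g y.2 - ‖g‖ ≤ correctedLevel g y := le_max_left _ _
    linarith
  · linarith [correctedLevel_nonneg g y]

lemma rowSummable_correctedLevel (hQ : IsStochasticKernel (P A B))
    (hlevel : RowSummable (P A B) fun y => (y.1 : ℝ)) (g : Fin m → ℝ) :
    RowSummable (P A B) (correctedLevel g) :=
  hQ.rowSummable_of_abs_le hlevel fun y =>
    (abs_of_nonneg (correctedLevel_nonneg g y)).trans_le (correctedLevel_le_level g y)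

lemma correctedLevel_le_transOp (hQ : IsStochasticKernel (P A B))
    (hJ : IsStochasticKernel (jumpKernel A)) (hlevel : RowSummable (P A B) fun y => (y.1 : ℝ))
    (hX : RowSummable (jumpKernel A) fun p => (p.1 : ℝ)) (hσ : 0 ≤ σ)
    (hg : ∀ j, transOp (jumpKernel A) (fun p => p.1 + g p.2) j = g j + σ) (x : S m) :
    correctedLevel g x ≤ transOp (P A B) (correctedLevel g) x := by
  have hnonneg := transOp_nonneg hQ.nonneg (correctedLevel_nonneg g)
  obtain ⟨_ | i, j⟩ := x
  · exact (correctedLevel_zero g j).trans_le (hnonneg _)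
  have hXg := hX.add (hJ.rowSummable_of_bounded fun p : ℤ × Fin m => abs_apply_le_norm g p.2)
  have h := le_transOp_P_succ (i := i) (j := j) (c := 0)
    (G := fun p => p.1 + g p.2 - (‖g‖ - (i + 1))) hQ hJ (rowSummable_correctedLevel hQ hlevel g _)
    (hXg.sub (hJ.rowSummable_const _) j)
    (fun k s => le_trans (by push_cast; linarith) (le_max_left _ _))
    (fun s => correctedLevel_nonneg g _) fun p hp => by
      have hp' : (p.1 : ℝ) + 1 ≤ -i := by exact_mod_cast hp
      linarith [(abs_le.1 (abs_apply_le_norm g p.2)).2]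
  rw [hJ.transOp_sub_const (hXg j), hg] at h
  refine max_le ?_ (hnonneg _)
  push_cast
  linarith

lemma min_correctedLevel_sub_le_transOp (hQ : IsStochasticKernel (P A B))
    (hJ : IsStochasticKernel (jumpKernel A))
    (habs : RowSummable (jumpKernel A) fun p => |(p.1 : ℝ)|) (g : Fin m → ℝ) (N : ℕ) (x : S m) :
    min (correctedLevel g x) N -
        (2 * ‖g‖ + ∑ j, transOp (jumpKernel A) (fun p => |(p.1 : ℝ)|) j) ≤
      transOp (P A B) (fun y => min (correctedLevel g y) N) x := by
  set f := correctedLevel g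
  have hmin0 : ∀ y, 0 ≤ min (f y) N :=
    fun y => le_min (correctedLevel_nonneg g y) N.cast_nonneg
  have hmean : ∀ j, 0 ≤ transOp (jumpKernel A) (fun p => |(p.1 : ℝ)|) j :=
    transOp_nonneg hJ.nonneg fun p => abs_nonneg _
  have hsingle : ∀ j, transOp (jumpKernel A) (fun p => |(p.1 : ℝ)|) j ≤
      ∑ i, transOp (jumpKernel A) (fun p => |(p.1 : ℝ)|) i := fun j =>
    Finset.single_le_sum (fun i _ => hmean i) (Finset.mem_univ j)
  obtain ⟨_ | i, j⟩ := x
  · have h0 := transOp_nonneg hQ.nonneg hmin0 (0, j)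
    linarith [min_le_left (f (0, j)) N, correctedLevel_zero g j, hsingle j, hmean j, norm_nonneg g]
  have h := le_transOp_P_succ (i := i) (j := j) (c := 0) (F := fun y => min (f y) N)
    (G := fun p => min (f (i + 1, j)) N - 2 * ‖g‖ - |(p.1 : ℝ)|) hQ hJ
    (hQ.rowSummable_of_bounded (fun y =>
      (abs_of_nonneg (hmin0 y)).trans_le (min_le_right _ _)) _)
    (((hJ.rowSummable_const _).sub habs) j)
    (fun k s => by
      have hlip := correctedLevel_sub_le g (i + 1, j) (k + 1, s)
      push_cast at hlip ⊢
      refine le_min ?_ ?_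
      · linarith [min_le_left (f (i + 1, j)) N]
      · linarith [min_le_right (f (i + 1, j)) N, norm_nonneg g,
          abs_nonneg ((k : ℝ) + 1 - (i + 1))])
    (fun s => hmin0 _) fun p hp => by
      have hp' : (p.1 : ℝ) + 1 ≤ -i := by exact_mod_cast hp
      have hf := (min_le_left (f (i + 1, j)) N).trans (correctedLevel_le_level g _)
      push_cast at hf
      linarith [neg_abs_le (p.1 : ℝ), norm_nonneg g]
  rw [transOp_sub (hJ.rowSummable_const _) habs, hJ.transOp_const] at h
  linarith [hsingle j]

/-- With nonnegative drift the corrected level would be subharmonic, hence harmonic; but it vanishes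
on level `0`, from which states where it is positive can be reached. -/
theorem drift_neg_of_isInvariantLaw [Nonempty (Fin m)] (hQ : IsStochasticKernel (P A B))
    (hJ : IsStochasticKernel (jumpKernel A)) (hπ : IsInvariantLaw (P A B) π)
    (hirr : ∀ x y, ∃ n, 0 < nStep (P A B) n x y)
    (hlevel : RowSummable (P A B) fun y => (y.1 : ℝ))
    (habs : RowSummable (jumpKernel A) fun p => |(p.1 : ℝ)|)
    (hg : ∀ j, transOp (jumpKernel A) (fun p => p.1 + g p.2) j = g j + σ) : σ < 0 := by
  by_contra! hσ
  have hsummable := rowSummable_correctedLevel hQ hlevel g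
  have hharm : ∀ x, transOp (P A B) (correctedLevel g) x ≤ correctedLevel g x := fun x =>
    hπ.transOp_le_of_subharmonic hQ (correctedLevel_nonneg g) hsummable
      (correctedLevel_le_transOp hQ hJ hlevel
        (hJ.rowSummable_of_abs_le habs fun _ => le_rfl) hσ hg)
      (min_correctedLevel_sub_le_transOp hQ hJ habs g)
      (hπ.pos_of_exists_nStep_pos hQ (hirr · x))
  obtain ⟨j⟩ := ‹Nonempty (Fin m)›
  obtain ⟨i, hi⟩ := exists_nat_gt (2 * ‖g‖)
  obtain ⟨n, hn⟩ := hirr (0, j) (i, j)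
  have hpos : 0 < correctedLevel g (i, j) :=
    lt_max_of_lt_left (by linarith [(abs_le.1 (abs_apply_le_norm g j)).1])
  have h := hQ.mul_nStep_le_of_transOp_le hsummable (correctedLevel_nonneg g) hharm (i, j) n (0, j)
  exact (mul_pos hpos hn).not_ge (h.trans_eq (correctedLevel_zero g j))

end CorrectedLevel

/-! ### Exponential moments -/

section ExpMoment

variable {β : Type*} {w X : β → ℝ}

lemma exp_le_one_add_add_sq_mul_exp_abs (u : ℝ) :
    Real.exp u ≤ 1 + u + u ^ 2 * Real.exp |u| := by
  have hcomplex : ‖(Real.exp u - (1 + u) : ℂ)‖ ≤ u ^ 2 * Real.exp |u| := by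
    simpa [Finset.sum_range_succ] using Complex.norm_exp_sub_sum_le_norm_mul_exp u 2
  have hreal : ‖Real.exp u - (1 + u)‖ ≤ u ^ 2 * Real.exp |u| := by exact_mod_cast hcomplex
  linarith [Real.le_norm_self (Real.exp u - (1 + u))]

lemma exp_mul_le_quadratic {γ δ : ℝ} (hγ : 0 ≤ γ) (hδ : 0 < δ) (hγδ : γ ≤ δ) (x : ℝ) :
    Real.exp (γ * x) ≤ 1 + γ * x + γ ^ 2 * (2 / δ ^ 2 * Real.exp (2 * δ * |x|)) := by
  have hsq : x ^ 2 ≤ 2 / δ ^ 2 * Real.exp (δ * |x|) := by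
    have hnn : 0 ≤ δ * |x| := by positivity
    have h := Real.quadratic_le_exp_of_nonneg hnn
    rw [div_mul_eq_mul_div, le_div_iff₀ (by positivity), ← sq_abs x]
    linarith [mul_pow δ |x| 2]
  have hexp : Real.exp |γ * x| ≤ Real.exp (δ * |x|) := by
    rw [abs_mul, abs_of_nonneg hγ]
    gcongr
  calc Real.exp (γ * x)
      ≤ 1 + γ * x + γ ^ 2 * (x ^ 2 * Real.exp |γ * x|) := by
        simpa only [mul_pow, mul_assoc] using exp_le_one_add_add_sq_mul_exp_abs (γ * x)
    _ ≤ 1 + γ * x + γ ^ 2 * (2 / δ ^ 2 * Real.exp (δ * |x|) * Real.exp (δ * |x|)) := by gcongr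
    _ = 1 + γ * x + γ ^ 2 * (2 / δ ^ 2 * Real.exp (2 * δ * |x|)) := by
        rw [mul_assoc _ (Real.exp _), ← Real.exp_add, ← two_mul, ← mul_assoc 2 δ]

lemma summable_mul_of_summable_mul_exp (hw : ∀ y, 0 ≤ w y) (hX : ∀ y, 0 ≤ X y) {ε : ℝ}
    (hε : 0 < ε) (h : Summable fun y => w y * Real.exp (ε * X y)) :
    Summable fun y => w y * X y := by
  refine (h.mul_left ε⁻¹).of_nonneg_of_le (fun y => mul_nonneg (hw y) (hX y)) fun y => ?_
  rw [mul_left_comm]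
  refine mul_le_mul_of_nonneg_left ((le_inv_mul_iff₀ hε).2 ?_) (hw y)
  linarith [Real.add_one_le_exp (ε * X y)]

lemma eventually_tsum_mul_exp_lt_one (hw : ∀ y, 0 ≤ w y) (hone : HasSum w 1) {σ : ℝ}
    (hX : HasSum (fun y => w y * X y) σ) (hσ : σ < 0) {ε : ℝ} (hε : 0 < ε)
    (hexp : Summable fun y => w y * Real.exp (ε * |X y|)) :
    ∀ᶠ γ in 𝓝[>] (0 : ℝ), Summable (fun y => w y * Real.exp (γ * X y)) ∧
      ∑' y, w y * Real.exp (γ * X y) < 1 := by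
  set c := 2 / (ε / 2) ^ 2 * ∑' y, w y * Real.exp (ε * |X y|)
  have hslope : ∀ᶠ γ in 𝓝[>] (0 : ℝ), σ + γ * c < 0 := by
    refine ((Continuous.tendsto (f := fun γ => σ + γ * c) (by fun_prop) 0).mono_left
      nhdsWithin_le_nhds).eventually_lt_const ?_
    simpa using hσ
  filter_upwards [hslope, Ioc_mem_nhdsGT (half_pos hε)] with γ hγσ hγ
  have hle : ∀ y, w y * Real.exp (γ * X y) ≤ w y *
      (1 + γ * X y + γ ^ 2 * (2 / (ε / 2) ^ 2 * Real.exp (ε * |X y|))) := fun y => by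
    have h := exp_mul_le_quadratic hγ.1.le (half_pos hε) hγ.2 (X y)
    rw [mul_div_cancel₀ ε two_ne_zero] at h
    exact mul_le_mul_of_nonneg_left h (hw y)
  have hsum : HasSum (fun y => w y *
      (1 + γ * X y + γ ^ 2 * (2 / (ε / 2) ^ 2 * Real.exp (ε * |X y|))))
      (1 + γ * σ + γ ^ 2 * c) := by
    refine ((hone.add (hX.mul_left γ)).add
      ((hexp.hasSum.mul_left (2 / (ε / 2) ^ 2)).mul_left (γ ^ 2))).congr_fun fun y => ?_
    ring
  have hs := hsum.summable.of_nonneg_of_le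
    (fun y => mul_nonneg (hw y) (Real.exp_pos _).le) hle
  refine ⟨hs, (hasSum_le hle hs.hasSum hsum).trans_lt ?_⟩
  linarith [mul_neg_of_pos_of_neg hγ.1 hγσ, show γ * (σ + γ * c) = γ * σ + γ ^ 2 * c by ring]

end ExpMoment

section LightTails

variable {m : ℕ} {A B : ℤ → Matrix (Fin m) (Fin m) ℝ}

lemma LightMat.eventually_summable {C : ℤ → Matrix (Fin m) (Fin m) ℝ} (h : LightMat C)
    (hC : ∀ k r s, 0 ≤ C k r s) : ∀ᶠ ε in 𝓝[>] (0 : ℝ), ∀ r s,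
      Summable fun k : ℕ => C (k + 1) r s * Real.exp (ε * (k + 1)) := by
  simp only [eventually_all]
  intro r s
  obtain ⟨δ, hδ, hs⟩ := h r s
  filter_upwards [Ioc_mem_nhdsGT hδ] with ε hε
  refine hs.of_nonneg_of_le (fun k => mul_nonneg (hC _ _ _) (Real.exp_pos _).le) fun k => ?_
  have := hC (k + 1) r s
  gcongr
  exact hε.2

lemma summable_prod_fin_of_nonneg {κ : Type*} {f : κ × Fin m → ℝ} (h0 : ∀ p, 0 ≤ f p)
    (h : ∀ s, Summable fun k => f (k, s)) : Summable f := by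
  refine (Equiv.prodComm (Fin m) κ).summable_iff.1 ?_
  exact (summable_prod_of_nonneg fun p => h0 _).2 ⟨h, (hasSum_fintype _).summable⟩

lemma LightMat.eventually_rowSummable_jumpKernel (h : LightMat A)
    (hJ : IsStochasticKernel (jumpKernel A)) : ∀ᶠ ε in 𝓝[>] (0 : ℝ),
      RowSummable (jumpKernel A) fun p => Real.exp (ε * max (p.1 : ℝ) 0) := by
  filter_upwards [h.eventually_summable fun k r s => hJ.nonneg r (k, s)] with ε hε j
  refine summable_prod_fin_of_nonneg
    (fun p => mul_nonneg (hJ.nonneg j p) (Real.exp_pos _).le) fun s => ?_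
  refine .of_nat_of_neg_add_one ((summable_nat_add_iff 1).1 ((hε j s).congr fun k => ?_)) ?_
  · push_cast
    rw [max_eq_left (by positivity)]
    rfl
  · have hinj : Function.Injective fun k : ℕ => ((-(k + 1 : ℤ), s) : ℤ × Fin m) := by
      intro k l hkl
      simpa using hkl
    refine ((hJ.hasSum_one j).summable.comp_injective hinj).congr fun k => ?_
    have hk : ((-(k + 1 : ℤ) : ℤ) : ℝ) ≤ 0 := by
      push_cast
      linarith [(k.cast_nonneg : (0 : ℝ) ≤ k)]
    simp only [Function.comp_apply, max_eq_right hk, mul_zero, Real.exp_zero, mul_one]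

lemma LightMat.eventually_summable_P_zero (h : LightMat B) (hB : ∀ k r s, 0 ≤ B k r s) :
    ∀ᶠ ε in 𝓝[>] (0 : ℝ), ∀ j, Summable fun y => P A B (0, j) y * Real.exp (ε * y.1) := by
  filter_upwards [h.eventually_summable hB] with ε hε j
  refine summable_prod_fin_of_nonneg (fun y => ?_) fun s =>
    (summable_nat_add_iff 1).1 ((hε j s).congr fun k => ?_)
  · rw [P_zero]
    exact mul_nonneg (hB _ _ _) (Real.exp_pos _).le
  · rw [P_zero]
    push_cast
    rfl

end LightTails

/-! ### Light tails imply geometric ergodicity -/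

lemma exists_transOp_le_add_of_finite {α : Type*} {Q : α → α → ℝ} {V : α → ℝ} {l : ℝ}
    (hQ : IsStochasticKernel Q) (hV : ∀ x, 0 ≤ V x) (hl : 0 ≤ l) {s : Set α} (hs : s.Finite)
    (h : ∀ x ∉ s, transOp Q V x ≤ l * V x) :
    ∃ b, 0 ≤ b ∧ ∀ x, transOp Q V x ≤ l * V x + b := by
  have hT := transOp_nonneg hQ.nonneg hV
  refine ⟨∑ x ∈ hs.toFinset, transOp Q V x, Finset.sum_nonneg fun x _ => hT x, fun x => ?_⟩
  by_cases hx : x ∈ s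
  · exact le_add_of_nonneg_of_le (mul_nonneg hl (hV x))
      (Finset.single_le_sum (fun y _ => hT y) (hs.mem_toFinset.2 hx))
  · exact (h x hx).trans (le_add_of_nonneg_right (Finset.sum_nonneg fun y _ => hT y))

/-- The Lyapunov function of the drift argument: the exponential of the level corrected by a
function `g` of the phase. -/
noncomputable def expLevel {m : ℕ} (γ : ℝ) (g : Fin m → ℝ) (y : S m) : ℝ :=
  Real.exp (γ * (y.1 + g y.2))

section ExpLevel

variable {m : ℕ} {A B : ℤ → Matrix (Fin m) (Fin m) ℝ} {g : Fin m → ℝ} {γ σ : ℝ} {K : ℕ}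

lemma finite_setOf_level_le (c : ℝ) : {x : S m | (x.1 : ℝ) ≤ c}.Finite := by
  refine ((Set.finite_Iic ⌊c⌋₊).prod Set.finite_univ).subset fun x hx => ⟨?_, Set.mem_univ _⟩
  exact Nat.le_floor hx

lemma finite_setOf_expLevel_le (hγ : 0 < γ) (g : Fin m → ℝ) (R : ℝ) :
    {x | expLevel γ g x ≤ R}.Finite := by
  refine (finite_setOf_level_le (R / γ + ‖g‖)).subset fun x hx => ?_
  have hexp : γ * (x.1 + g x.2) ≤ R := ((lt_add_one _).le.trans (Real.add_one_le_exp _)).trans hx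
  have hdiv := (le_div_iff₀' hγ).2 hexp
  have hg := (abs_le.1 (abs_apply_le_norm g x.2)).1
  exact (by linarith : (x.1 : ℝ) ≤ R / γ + ‖g‖)

lemma rowSummable_expLevel (hQ : IsStochasticKernel (P A B))
    (hJ : IsStochasticKernel (jumpKernel A)) (hγ : 0 < γ)
    (hA : RowSummable (jumpKernel A) fun p => Real.exp (γ * max (p.1 : ℝ) 0))
    (hB : ∀ j, Summable fun y => P A B (0, j) y * Real.exp (γ * y.1)) (g : Fin m → ℝ) :
    RowSummable (P A B) (expLevel γ g) := by
  have hle : ∀ y : S m, |expLevel γ g y| ≤ Real.exp (γ * ‖g‖) * Real.exp (γ * y.1) := fun y => by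
    rw [expLevel, Real.abs_exp, ← Real.exp_add, ← mul_add, add_comm]
    gcongr
    exact (abs_le.1 (abs_apply_le_norm g y.2)).2
  rintro ⟨_ | i, j⟩
  · refine ((hB j).mul_left (Real.exp (γ * ‖g‖))).of_norm_bounded fun y => ?_
    rw [mul_left_comm]
    exact hQ.norm_mul_le_of_abs_le hle _ y
  · refine summable_P_succ_mul hJ ((hA.const_mul (Real.exp (γ * ‖g‖) * Real.exp (γ * (i + 1)))) j)
      fun k s => (hle _).trans ?_
    rw [mul_assoc]
    refine mul_le_mul_of_nonneg_left ?_ (Real.exp_pos _).le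
    rw [← Real.exp_add, ← mul_add]
    gcongr
    push_cast
    linarith [le_max_left ((k : ℝ) + 1 - (i + 1)) 0]

lemma eventually_transOp_exp_lt_one (hJ : IsStochasticKernel (jumpKernel A)) {ε : ℝ} (hε : 0 < ε)
    (hA : RowSummable (jumpKernel A) fun p => Real.exp (ε * max (p.1 : ℝ) 0)) (hσ : σ < 0)
    (hg : ∀ j, transOp (jumpKernel A) (fun p => max (p.1 : ℝ) (-K) + g p.2) j = g j + σ) :
    ∀ᶠ γ in 𝓝[>] (0 : ℝ), ∀ j,
      Summable (fun p => jumpKernel A j p * Real.exp (γ * (max (p.1 : ℝ) (-K) + g p.2 - g j))) ∧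
      transOp (jumpKernel A) (fun p => Real.exp (γ * (max (p.1 : ℝ) (-K) + g p.2 - g j))) j <
        1 := by
  rw [eventually_all]
  intro j
  have hpos := summable_mul_of_summable_mul_exp (hJ.nonneg j) (fun p => le_max_right (p.1 : ℝ) 0)
    hε (hA j)
  have hmax := summable_mul_max_neg (hJ.nonneg j) (hJ.hasSum_one j).summable hpos K
  have hXg : Summable fun p => jumpKernel A j p * (max (p.1 : ℝ) (-K) + g p.2) := by
    simpa only [mul_add] using
      hmax.add (hJ.rowSummable_of_bounded (fun p : ℤ × Fin m => abs_apply_le_norm g p.2) j)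
  have hX : HasSum (fun p => jumpKernel A j p * (max (p.1 : ℝ) (-K) + g p.2 - g j)) σ := by
    have hs : Summable fun p => jumpKernel A j p * (max (p.1 : ℝ) (-K) + g p.2 - g j) := by
      simpa only [mul_sub] using hXg.sub (hJ.rowSummable_const (g j) j)
    have h := hJ.transOp_sub_const hXg (g j)
    rw [hg, add_sub_cancel_left] at h
    exact h ▸ hs.hasSum
  refine eventually_tsum_mul_exp_lt_one (hJ.nonneg j) (hJ.hasSum_one j) hX hσ hε ?_
  refine ((hA.const_mul (Real.exp (ε * (K + 2 * ‖g‖)))) j).of_norm_bounded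
    (hJ.norm_mul_le_of_abs_le (fun p => ?_) j)
  rw [Real.abs_exp, ← Real.exp_add, ← mul_add]
  have hp := abs_le.1 (abs_apply_le_norm g p.2)
  have hj := abs_le.1 (abs_apply_le_norm g j)
  have hK : (0 : ℝ) ≤ K := K.cast_nonneg
  gcongr
  refine abs_le.2 ⟨?_, ?_⟩
  · linarith [le_max_right (p.1 : ℝ) (-K), le_max_right (p.1 : ℝ) 0]
  · linarith [max_le_max_left (p.1 : ℝ) (neg_nonpos.2 hK)]

lemma transOp_expLevel_succ_le (hQ : IsStochasticKernel (P A B))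
    (hJ : IsStochasticKernel (jumpKernel A)) (hγ : 0 < γ)
    (hV : RowSummable (P A B) (expLevel γ g)) {i : ℕ} (hi : K + 2 * ‖g‖ ≤ i + 1) {j : Fin m}
    (hs : Summable fun p =>
      jumpKernel A j p * Real.exp (γ * (max (p.1 : ℝ) (-K) + g p.2 - g j))) :
    transOp (P A B) (expLevel γ g) (i + 1, j) ≤
      expLevel γ g (i + 1, j) *
        transOp (jumpKernel A) (fun p => Real.exp (γ * (max (p.1 : ℝ) (-K) + g p.2 - g j))) j := by
  have hsplit : ∀ p : ℤ × Fin m, expLevel γ g (i + 1, j) *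
      Real.exp (γ * (max (p.1 : ℝ) (-K) + g p.2 - g j)) =
        Real.exp (γ * (i + 1 + max (p.1 : ℝ) (-K) + g p.2)) := fun p => by
    rw [expLevel, ← Real.exp_add]
    push_cast
    ring_nf
  rw [← transOp_const_mul]
  refine transOp_P_succ_le (c := Real.exp (γ * ‖g‖)) hQ hJ (hV _)
    ((hs.mul_left (expLevel γ g (i + 1, j))).congr fun p => mul_left_comm _ _ _)
    (fun k s => ?_) (fun s => ?_) fun p _ => ?_
  · rw [hsplit, expLevel]
    gcongr
    push_cast
    linarith [le_max_left ((k : ℝ) + 1 - (i + 1)) (-K)]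
  · rw [expLevel]
    gcongr
    linarith [(abs_le.1 (abs_apply_le_norm g s)).2, (Nat.cast_zero : ((0 : ℕ) : ℝ) = 0)]
  · rw [hsplit]
    gcongr
    linarith [le_max_right (p.1 : ℝ) (-K), (abs_le.1 (abs_apply_le_norm g p.2)).1]

theorem exists_expLevel_drift [Nonempty (Fin m)] (hQ : IsStochasticKernel (P A B))
    (hJ : IsStochasticKernel (jumpKernel A))
    (hA : ∀ᶠ ε in 𝓝[>] (0 : ℝ),
      RowSummable (jumpKernel A) fun p => Real.exp (ε * max (p.1 : ℝ) 0))
    (hB : ∀ᶠ ε in 𝓝[>] (0 : ℝ), ∀ j, Summable fun y => P A B (0, j) y * Real.exp (ε * y.1))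
    (hσ : σ < 0)
    (hg : ∀ j, transOp (jumpKernel A) (fun p => max (p.1 : ℝ) (-K) + g p.2) j = g j + σ) :
    ∃ γ : ℝ, 0 < γ ∧ RowSummable (P A B) (expLevel γ g) ∧ ∃ l b : ℝ, 0 ≤ l ∧ l < 1 ∧ 0 ≤ b ∧
      ∀ x, transOp (P A B) (expLevel γ g) x ≤ l * expLevel γ g x + b := by
  obtain ⟨ε, hε, hAε⟩ := (eventually_mem_nhdsWithin.and hA).exists
  obtain ⟨γ, hγ, hAγ, hBγ, hmoment⟩ := (eventually_mem_nhdsWithin.and <| hA.and <| hB.and <|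
    eventually_transOp_exp_lt_one hJ hε hAε hσ hg).exists
  have hV := rowSummable_expLevel hQ hJ hγ hAγ hBγ g
  obtain ⟨j₀, hmax⟩ := Finite.exists_max fun j =>
    transOp (jumpKernel A) (fun p => Real.exp (γ * (max (p.1 : ℝ) (-K) + g p.2 - g j))) j
  have hl := transOp_nonneg hJ.nonneg
    (fun p => (Real.exp_pos (γ * (max (p.1 : ℝ) (-K) + g p.2 - g j₀))).le) j₀
  obtain ⟨b, hb, hdrift⟩ := exists_transOp_le_add_of_finite hQ
    (fun x => (Real.exp_pos _).le : ∀ x, 0 ≤ expLevel γ g x) hl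
    (finite_setOf_level_le (K + 2 * ‖g‖)) fun x hx => by
      obtain ⟨_ | i, j⟩ := x
      · exact absurd ((Nat.cast_zero (R := ℝ)).trans_le (by positivity)) hx
      · have hi : K + 2 * ‖g‖ ≤ i + 1 := by exact_mod_cast (not_le.1 hx).le
        refine (transOp_expLevel_succ_le hQ hJ hγ hV hi (hmoment j).1).trans ?_
        rw [mul_comm]
        exact mul_le_mul_of_nonneg_right (hmax j) (Real.exp_pos _).le
  exact ⟨γ, hγ, hV, _, b, hl, (hmoment j₀).2, hb, hdrift⟩

end ExpLevel

theorem isGeometricallyErgodic_of_lightMat {m : ℕ} [Nonempty (Fin m)]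
    {A B : ℤ → Matrix (Fin m) (Fin m) ℝ} {π : S m → ℝ} (hB : ∀ k r s, 0 ≤ B k r s)
    (hQ : IsStochasticKernel (P A B)) (hJ : IsStochasticKernel (jumpKernel A))
    (hπ : IsInvariantLaw (P A B) π)
    (hprim : ∀ x y, ∀ᶠ n in atTop, 0 < nStep (P A B) n x y)
    (hirr : ∀ r s, ∃ n, 0 < (matA A ^ n) r s) (hAlight : LightMat A) (hBlight : LightMat B) :
    IsGeometricallyErgodic (P A B) π := by
  have hAexp := hAlight.eventually_rowSummable_jumpKernel hJ
  have hBexp := hBlight.eventually_summable_P_zero (A := A) hB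
  obtain ⟨ε, hε, hAε, hBε⟩ := (eventually_mem_nhdsWithin.and (hAexp.and hBexp)).exists
  have hpos : RowSummable (jumpKernel A) fun p => max (p.1 : ℝ) 0 := fun j =>
    summable_mul_of_summable_mul_exp (hJ.nonneg j) (fun p => le_max_right _ _) hε (hAε j)
  have hlevel := rowSummable_level hJ hpos fun j =>
    summable_mul_of_summable_mul_exp (hQ.nonneg _) (fun y => y.1.cast_nonneg) hε (hBε j)
  obtain ⟨K, g, σ, hσ, hg⟩ | ⟨habs, g, σ, hσ, hg⟩ :=
    exists_negative_drift_or_nonneg_drift hJ hpos (transOp_jumpKernel_snd hJ) hirr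
  · obtain ⟨γ, hγ, hV, l, b, hl0, hl1, hb, hdrift⟩ :=
      exists_expLevel_drift hQ hJ hAexp hBexp hσ hg
    obtain ⟨j⟩ := ‹Nonempty (Fin m)›
    exact hQ.isGeometricallyErgodic_of_drift hπ (o := (0, j)) (hprim · _)
      (fun x => (Real.exp_pos _).le) hV (finite_setOf_expLevel_le hγ g) hl0 hl1 hb hdrift
  · have hneg := drift_neg_of_isInvariantLaw hQ hJ hπ (fun x y => (hprim x y).exists) hlevel habs hg
    exact absurd hσ hneg.not_ge

/-! ### Radii of convergence -/

lemma one_lt_radius_iff {c : ℕ → ℝ} :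
    1 < radius c ↔ ∃ ε > (0 : ℝ), Summable fun k : ℕ => c k * Real.exp (ε * (k + 1)) := by
  have hexp : ∀ (ε : ℝ) (k : ℕ), Real.exp (ε * (k + 1)) = Real.exp ε ^ k * Real.exp ε :=
    fun ε k => by rw [mul_add_one, Real.exp_add, mul_comm ε, Real.exp_nat_mul]
  simp only [radius, lt_iSup_iff, hexp, ← mul_assoc, summable_mul_right_iff (Real.exp_pos _).ne']
  constructor
  · rintro ⟨r, hs, hr⟩
    have hr1 : (1 : ℝ) < r := by exact_mod_cast hr
    refine ⟨Real.log r, Real.log_pos hr1, ?_⟩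
    rwa [Real.exp_log (zero_lt_one.trans hr1)]
  · rintro ⟨ε, hε, hs⟩
    have hlt : 1 < (Real.exp ε).toNNReal := Real.one_lt_toNNReal.2 (Real.one_lt_exp_iff.2 hε)
    refine ⟨(Real.exp ε).toNNReal, ?_, ENNReal.one_lt_coe_iff.2 hlt⟩
    rwa [Real.coe_toNNReal _ (Real.exp_pos ε).le]

lemma one_lt_iInf_radius_iff {m : ℕ} (C : ℤ → Matrix (Fin m) (Fin m) ℝ) :
    1 < (⨅ (r : Fin m) (s : Fin m), radius fun k => C (k + 1) r s) ↔ LightMat C := by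
  simp only [← Finset.inf_univ_eq_iInf, Finset.lt_inf_iff ENNReal.one_lt_top, Finset.mem_univ,
    true_imp_iff, one_lt_radius_iff]
  rfl

/-! ### The characterisation -/

lemma IsStochasticKernel.eventually_nStep_pos {α : Type*} [DecidableEq α] {Q : α → α → ℝ}
    (hQ : IsStochasticKernel Q) {x y : α} (hxy : ∃ n, 0 < nStep Q n x y)
    (hy : ∀ᶠ n in atTop, 0 < nStep Q n y y) : ∀ᶠ n in atTop, 0 < nStep Q n x y := by
  obtain ⟨k, hk⟩ := hxy
  filter_upwards [(tendsto_sub_atTop_nat k).eventually hy, eventually_ge_atTop k] with n hn hkn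
  rw [← Nat.add_sub_cancel' hkn]
  exact (mul_pos hk hn).trans_le (hQ.nStep_mul_nStep_le k (n - k) x y y)

lemma Pn_eq_nStep {m : ℕ} (Q : S m → S m → ℝ) (n : ℕ) (x y : S m) :
    Pn Q n x y = nStep Q n x y := by
  induction n generalizing x with
  | zero => rw [nStep_zero, Pn]
  | succ n ih => simp only [Pn, nStep_succ, transOp, ih]

theorem isGeometricallyErgodic_iff_lightMat {m : ℕ} [Nonempty (Fin m)]
    {A B : ℤ → Matrix (Fin m) (Fin m) ℝ} {π : S m → ℝ} (hA : ∀ k r s, 0 ≤ A k r s)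
    (hB : ∀ k r s, 0 ≤ B k r s) (hQ : IsStochasticKernel (P A B)) (hphase : PhaseStochastic A)
    (hπ : IsInvariantLaw (P A B) π)
    (hprim : ∀ x y, ∀ᶠ n in atTop, 0 < nStep (P A B) n x y)
    (hirr : ∀ r s, ∃ n, 0 < (matA A ^ n) r s) :
    IsGeometricallyErgodic (P A B) π ↔ LightMat A ∧ LightMat B := by
  obtain ⟨j⟩ := ‹Nonempty (Fin m)›
  have hpos : 0 < π (0, j) := hπ.pos_of_exists_nStep_pos hQ fun x => (hprim x _).exists
  exact ⟨fun h => h.lightMat hQ hπ hpos hA hphase, fun h => isGeometricallyErgodic_of_lightMat hB hQ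
    (isStochasticKernel_jumpKernel hA hphase) hπ hprim hirr h.1 h.2⟩

/-- For an irreducible, aperiodic, positive recurrent `GI/G/1`-type Markov
chain with stationary distribution `π` and stochastic phase matrix `A`, the chain is
geometrically ergodic iff `min(φ_{A+}, φ_{B+}) > 1`, equivalently iff both `{A_k}_{k≥1}` and
`{B_k}_{k≥1}` are light-tailed. -/
theorem geometric_ergodicity_iff {m : ℕ} (hm : 0 < m)
    (A B : ℤ → Matrix (Fin m) (Fin m) ℝ)
    (hA0 : ∀ k r s, 0 ≤ A k r s) (hB0 : ∀ k r s, 0 ≤ B k r s)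
    (hP : Stochastic (P A B))
    (hirr : ChainIrreducible (P A B)) (hap : ChainAperiodic (P A B))
    (hphase : PhaseStochastic A) (hphaseirr : MatIrreducible (matA A))
    (pd : S m → ℝ) (hpd : IsStationary (P A B) pd) :
    ((∃ ρ : ℝ, 0 ≤ ρ ∧ ρ < 1 ∧ ∃ M : S m → S m → ℝ,
        ∀ (x y : S m) (n : ℕ), |Pn (P A B) n x y - pd y| ≤ M x y * ρ ^ n)
      ↔ 1 < min (phiA A) (phiB B)) ∧
    ((∃ ρ : ℝ, 0 ≤ ρ ∧ ρ < 1 ∧ ∃ M : S m → S m → ℝ,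
        ∀ (x y : S m) (n : ℕ), |Pn (P A B) n x y - pd y| ≤ M x y * ρ ^ n)
      ↔ (LightMat A ∧ LightMat B)) := by
  have : Nonempty (Fin m) := Fin.pos_iff_nonempty.1 hm
  have hQ : IsStochasticKernel (P A B) := ⟨hP.1, hP.2⟩
  have hπ : IsInvariantLaw (P A B) pd := ⟨hpd.1, hpd.2.1, hpd.2.2⟩
  simp only [ChainIrreducible, ChainAperiodic, Pn_eq_nStep] at hirr hap ⊢
  have hprim : ∀ x y, ∀ᶠ n in atTop, 0 < nStep (P A B) n x y := fun x y =>
    hQ.eventually_nStep_pos ((hirr x y).imp fun _ => And.right) (eventually_atTop.2 (hap y))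
  have hlight : IsGeometricallyErgodic (P A B) pd ↔ LightMat A ∧ LightMat B :=
    isGeometricallyErgodic_iff_lightMat hA0 hB0 hQ hphase hπ hprim
      fun r s => (hphaseirr r s).imp fun _ => And.right
  have hradius : 1 < min (phiA A) (phiB B) ↔ LightMat A ∧ LightMat B :=
    lt_min_iff.trans (and_congr (one_lt_iInf_radius_iff A) (one_lt_iInf_radius_iff B))
  exact ⟨hlight.trans hradius.symm, hlight⟩

end GIG1
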